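/- Let N be a lattice of rank d ≥ 1 with dual lattice M = Hom_ℤ(N, ℤ), and let σ ⊆ N_ℝ be a rational polyhedral cone with dim σ = d and σ ≠ N_ℝ. Let U ⊆ N_ℝ be a convex set of the form U = conv(F) + cone(G), where F ⊆ N_ℝ is finite and G ⊆ N is finite, such that: 0 ∈ U; ⋃_{t>0} tU = σ; and N ∩ U contains a finite set generating σ as a convex cone. Let a > 0 and suppose N ∩ int(aU) = ∅. Set l = d − dim(span of cone(G)), the corank of the recession cone of U; then l ≥ 1 and there exists a nonzero φ ∈ M with φ_ℝ nonnegative on σ and φ_ℝ(U) ⊆ [0, 1/γ(l,a)], where γ is defined by γ(1,a) = a and γ(k,a) = γ(k−1, a²/k²) for k ≥ 2. Since l ≤ d and γ(k,a) is nonincreasing in k, this strengthens the bound 1/γ(d,a). -/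

import Mathlib

open Pointwise

/-- The lattice `ℤ^d` viewed inside its realification `ℝ^d`
(a model of an arbitrary lattice of rank `d`); its dual lattice `M` is again `ℤ^d`,
paired by `⟨m, e⟩ = ∑ i, m i * e i`. -/
def intPts (d : ℕ) : Set (Fin d → ℝ) := {x | ∀ i, ∃ n : ℤ, x i = (n : ℝ)}

/-- The convex cone generated by a set `s`: all finite nonnegative linear
combinations of elements of `s`. -/
def coneHull {V : Type*} [AddCommGroup V] [Module ℝ V] (s : Set V) : Set V :=
  {x | ∃ (n : ℕ) (c : Fin n → ℝ) (v : Fin n → V),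
    (∀ i, 0 ≤ c i) ∧ (∀ i, v i ∈ s) ∧ x = ∑ i, c i • v i}

/-- The function `γ(d, a)` defined recursively by `γ(1, a) = a` and
`γ(d, a) = γ(d - 1, a² / d²)` for `d ≥ 2`. -/
noncomputable def gammaFn : ℕ → ℝ → ℝ
  | 0, a => a
  | 1, a => a
  | n + 2, a => gammaFn (n + 1) (a ^ 2 / ((n : ℝ) + 2) ^ 2)

/-!
Dividing by the span of the recession cone, one may assume that `U` is a convex body `K` in `ℝⁿ`,
`n = l`, and one argues by induction on `n`. Since no lattice point lies in the interior of `a • K`,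
the images of the integral translates of some dilation `b • K` are pairwise disjoint modulo some
rational subspace `W` of positive corank `j`; otherwise, the dilations being chosen with sum `a`,
the translates of `a • K` would cover `ℝⁿ`. Hence simplices with vertices in `K` have normalized
volume at most `g = j! / b ^ j` modulo `W`.

If the lattice points of `K` do not generate `ℝⁿ / W` as a cone, then some basis of lattice points
has a coordinate that is nonnegative on `K`, and this coordinate times the determinant of the basis
is an integral functional bounded by `g` on `K`. If they do, then `W ∩ g • K` is again generated by
lattice points, the induction hypothesis gives a functional on `W`, and a suitable extension of it
to `ℝⁿ` obeys the same bound on `K`. The numerical estimates this requires fail only for `n = 2` and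
`a > 1`, where a unimodular triangle of lattice points of `K` gives the functional directly.
-/

/-! ### The function `γ` -/

lemma gammaFn_mono {n : ℕ} {a b : ℝ} (ha : 0 ≤ a) (hab : a ≤ b) : gammaFn n a ≤ gammaFn n b := by
  induction n, a using gammaFn.induct generalizing b with
  | case1 a => exact hab
  | case2 a => exact hab
  | case3 n a ih => exact ih (by positivity) (by gcongr)

lemma gammaFn_pos {n : ℕ} {a : ℝ} (ha : 0 < a) : 0 < gammaFn n a := by
  induction n, a using gammaFn.induct with
  | case1 a => exact ha
  | case2 a => exact ha
  | case3 n a ih => exact ih (by positivity)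

lemma gammaFn_of_two_le {n : ℕ} (hn : 2 ≤ n) (a : ℝ) :
    gammaFn n a = gammaFn (n - 1) (a ^ 2 / (n : ℝ) ^ 2) := by
  obtain ⟨k, rfl⟩ := Nat.exists_eq_add_of_le' hn
  simp [gammaFn]

lemma sq_mul_pow_le_sq {n k : ℕ} {q : ℝ} (hq : 0 ≤ q) (hqn : n * q ≤ 1) (hk : k + 2 ≤ n) :
    (n : ℝ) ^ 2 * q ^ k ≤ ((n - k : ℕ) : ℝ) ^ 2 := by
  have hkn : (2 : ℝ) ≤ (n - k : ℕ) := by exact_mod_cast (by omega : 2 ≤ n - k)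
  rcases k with _ | _ | k
  · simp
  · have hn : (3 : ℝ) ≤ n := by exact_mod_cast hk
    rw [Nat.cast_sub (by omega)]
    push_cast
    nlinarith
  · have hn : (1 : ℝ) ≤ n := by exact_mod_cast (by omega : 1 ≤ n)
    have hq1 : q ≤ 1 := by nlinarith
    calc (n : ℝ) ^ 2 * q ^ (k + 2) = (n * q) ^ 2 * q ^ k := by ring
      _ ≤ 1 * 1 := by gcongr <;> exact pow_le_one₀ (by positivity) ‹_›
      _ ≤ _ := by nlinarith

lemma gammaFn_le_gammaFn_sub {n : ℕ} {a : ℝ} (ha : 0 < a) (han : a ≤ n) {j : ℕ} (hj : j < n) :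
    gammaFn n a ≤ gammaFn (n - j) (a * (a / n ^ 2) ^ j) := by
  have hn : (0 : ℝ) < n := by exact_mod_cast (by omega : 0 < n)
  set q := a / (n : ℝ) ^ 2 with hq
  have hqa : (n : ℝ) ^ 2 * q = a := by rw [hq]; field_simp
  have hqn : n * q ≤ 1 := by rw [hq, mul_div_assoc', div_le_one (by positivity)]; nlinarith
  induction j with
  | zero => simp
  | succ j ih =>
    refine (ih (by omega)).trans ?_
    have hm : (0 : ℝ) < (n - j : ℕ) := by exact_mod_cast (by omega : 0 < n - j)
    rw [gammaFn_of_two_le (by omega), Nat.sub_sub]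
    refine gammaFn_mono (by positivity) ?_
    rw [div_le_iff₀ (by positivity)]
    calc (a * q ^ j) ^ 2 = a * q ^ (j + 1) * (n ^ 2 * q ^ j) := by rw [← hqa]; ring
      _ ≤ a * q ^ (j + 1) * ((n - j : ℕ) : ℝ) ^ 2 := by
        gcongr
        exact sq_mul_pow_le_sq (by positivity) hqn (by omega)

lemma factorial_succ_le_succ_pow (k : ℕ) : (k + 1).factorial ≤ (k + 1) ^ k := by
  induction k with
  | zero => simp
  | succ k ih =>
    calc (k + 2).factorial = (k + 2) * (k + 1).factorial := Nat.factorial_succ _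
      _ ≤ (k + 2) * (k + 2) ^ k := by gcongr; exact ih.trans (by gcongr; omega)
      _ = (k + 2) ^ (k + 1) := (pow_succ' _ _).symm

lemma sq_mul_factorial_le_pow {j : ℕ} (hj : 1 ≤ j) :
    (j : ℝ) ^ 2 * j.factorial ≤ (2 * j - 1) ^ j := by
  have hj' : (1 : ℝ) ≤ j := by exact_mod_cast hj
  have hfac : (j.factorial : ℝ) ≤ j ^ (j - 1) := by
    obtain ⟨k, rfl⟩ := Nat.exists_eq_add_of_le' hj
    exact_mod_cast factorial_succ_le_succ_pow k
  have hbern : (j : ℝ) ≤ ((2 * j - 1) / j) ^ j := by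
    have := one_add_mul_le_pow (a := ((j : ℝ) - 1) / j) (by
      have : 0 ≤ ((j : ℝ) - 1) / j := div_nonneg (by linarith) (by linarith)
      linarith) j
    calc (j : ℝ) = 1 + j * ((j - 1) / j) := by field_simp; ring
      _ ≤ (1 + (j - 1) / j) ^ j := this
      _ = _ := by congr 1; field_simp; ring
  calc (j : ℝ) ^ 2 * j.factorial ≤ (j : ℝ) ^ 2 * (j : ℝ) ^ (j - 1) := by gcongr
    _ = (j : ℝ) * (j : ℝ) ^ j := by rw [← pow_add, ← pow_succ']; congr 1; omega
    _ ≤ ((2 * j - 1) / j : ℝ) ^ j * (j : ℝ) ^ j := by gcongr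
    _ = _ := by rw [← mul_pow, div_mul_cancel₀ _ (by positivity)]

lemma sq_mul_pow_sub_le {n j : ℕ} {q : ℝ} (hq : 0 ≤ q) (hqn : n * q ≤ 1) (hj : 1 ≤ j)
    (hjn : j ≤ n) (h2 : n = 2 → n ^ 2 * q ≤ 1) :
    n ^ 2 * q ^ (n - j) ≤ j ^ 2 ∨ n ^ 2 * q ^ (n - j) ≤ 1 := by
  obtain ⟨k, rfl⟩ := Nat.exists_eq_add_of_le hjn
  rw [Nat.add_sub_cancel_left]
  rcases k with _ | _ | k
  · simp
  · rw [zero_add, pow_one]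
    rcases hj.eq_or_lt with rfl | hj
    · exact .inr (h2 rfl)
    · left
      have : (2 : ℝ) ≤ j := by exact_mod_cast hj
      push_cast at hqn ⊢
      nlinarith
  · right
    have hn : (1 : ℝ) ≤ (j + (k + 2) : ℕ) := by exact_mod_cast (by omega : 1 ≤ j + (k + 2))
    calc _ = ((j + (k + 2) : ℕ) * q) ^ 2 * q ^ k := by ring
      _ ≤ 1 * 1 := by gcongr <;> exact pow_le_one₀ (by positivity) (by nlinarith)
      _ = 1 := one_mul 1

/-- The bound `j! / b ^ j` on determinants modulo a subspace of corank `j` along which the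
`b = (2 * j - 1) * a / n ^ 2` multiple of a body packs; these multiples, `1 ≤ j ≤ n`, add up to
`a`. -/
noncomputable def detBound (n : ℕ) (a : ℝ) (j : ℕ) : ℝ :=
  j.factorial / ((2 * j - 1) * (a / n ^ 2)) ^ j

lemma detBound_pos {n j : ℕ} {a : ℝ} (hn : 0 < n) (hj : 1 ≤ j) (ha : 0 < a) :
    0 < detBound n a j := by
  have hj' : (1 : ℝ) ≤ j := by exact_mod_cast hj
  have : (0 : ℝ) < 2 * j - 1 := by linarith
  unfold detBound
  positivity

lemma detBound_mul_pow {n j : ℕ} {a : ℝ} (hn : 0 < n) (ha : 0 < a) :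
    detBound n a j * (a / n ^ 2) ^ j = j.factorial / (2 * j - 1) ^ j := by
  have : (0 : ℝ) < (a / n ^ 2) ^ j := by positivity
  rw [detBound, mul_pow, ← div_div, div_mul_cancel₀ _ this.ne']

lemma detBound_mul_pow_le_one {n j : ℕ} {a : ℝ} (hn : 0 < n) (hj : 1 ≤ j) (ha : 0 < a) :
    detBound n a j * (a / n ^ 2) ^ j ≤ 1 ∧ j ^ 2 * (detBound n a j * (a / n ^ 2) ^ j) ≤ 1 := by
  have hj' : (1 : ℝ) ≤ j := by exact_mod_cast hj
  have hkey := sq_mul_factorial_le_pow hj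
  have hpos : (0 : ℝ) < (2 * j - 1) ^ j := pow_pos (by linarith) j
  rw [detBound_mul_pow hn ha, mul_div_assoc', div_le_one hpos, div_le_one hpos]
  exact ⟨(le_mul_of_one_le_left (by positivity) (by nlinarith)).trans hkey, hkey⟩

lemma gammaFn_le_gammaFn_div_detBound {n j : ℕ} {a : ℝ} (ha : 0 < a) (han : a ≤ n) (hj : 1 ≤ j)
    (hjn : j < n) : gammaFn n a ≤ gammaFn (n - j) (a / detBound n a j) := by
  have hn : 0 < n := by omega
  refine (gammaFn_le_gammaFn_sub ha han hjn).trans (gammaFn_mono (by positivity) ?_)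
  rw [le_div_iff₀ (detBound_pos hn hj ha), mul_assoc, mul_comm (_ ^ j)]
  exact mul_le_of_le_one_right ha.le (detBound_mul_pow_le_one hn hj ha).1

lemma gammaFn_mul_detBound_le_one {n j : ℕ} {a : ℝ} (ha : 0 < a) (han : a ≤ n) (hj : 1 ≤ j)
    (hjn : j ≤ n) (h2 : n = 2 → a ≤ 1) : gammaFn n a * detBound n a j ≤ 1 := by
  have hn : 0 < n := by omega
  have hγ : gammaFn n a ≤ a * (a / n ^ 2) ^ (n - 1) := by
    have := gammaFn_le_gammaFn_sub ha han (j := n - 1) (by omega)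
    rwa [Nat.sub_sub_self (by omega)] at this
  have hC := detBound_mul_pow_le_one hn hj ha
  have hg := detBound_pos hn hj ha
  set q := a / (n : ℝ) ^ 2 with hq
  have hqa : a = n ^ 2 * q := by rw [hq]; field_simp
  have hq0 : 0 < q := by positivity
  have hqn : n * q ≤ 1 := by rw [hq, mul_div_assoc', div_le_one (by positivity)]; nlinarith
  have habsorb := sq_mul_pow_sub_le hq0.le hqn hj hjn fun h => by rw [← hqa]; exact h2 h
  have hC0 : 0 ≤ detBound n a j * q ^ j := by positivity
  calc gammaFn n a * detBound n a j ≤ a * q ^ (n - 1) * detBound n a j := by gcongr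
    _ = n ^ 2 * q ^ (n - j) * (detBound n a j * q ^ j) := by
      rw [hqa]
      have : q ^ (n - j) * q ^ j = q * q ^ (n - 1) := by
        rw [← pow_add, ← pow_succ']; congr 1; omega
      linear_combination (-n ^ 2 * detBound n (n ^ 2 * q) j) * this
    _ ≤ 1 := by
      rcases habsorb with h | h
      · exact (mul_le_mul_of_nonneg_right h hC0).trans hC.2
      · exact (mul_le_of_le_one_left hC0 h).trans hC.1

/-! ### Polyhedral cones -/

section Cones

open PointedCone

variable {E F : Type*} [AddCommGroup E] [Module ℝ E] [AddCommGroup F] [Module ℝ F]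

lemma mem_hull_finset {t : Finset E} {x : E} :
    x ∈ hull ℝ (t : Set E) ↔ ∃ c : E → ℝ, (∀ v ∈ t, 0 ≤ c v) ∧ ∑ v ∈ t, c v • v = x := by
  classical
  constructor
  · intro hx
    obtain ⟨c, -, rfl⟩ := Submodule.mem_span_finset.1 hx
    exact ⟨fun v => c v, fun v _ => (c v).2, rfl⟩
  · rintro ⟨c, hc, rfl⟩
    exact Submodule.sum_mem _ fun v hv => PointedCone.smul_mem _ (hc v hv) (subset_hull hv)

lemma coneHull_eq_hull (s : Set E) : coneHull s = hull ℝ s := by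
  ext x
  constructor
  · rintro ⟨n, c, v, hc, hv, rfl⟩
    exact Submodule.sum_mem _ fun i _ => PointedCone.smul_mem _ (hc i) (subset_hull (hv i))
  · intro hx
    obtain ⟨n, c, v, rfl⟩ := Submodule.mem_span_set'.1 hx
    exact ⟨n, fun i => c i, fun i => v i, fun i => (c i).2, fun i => (v i).2, rfl⟩

lemma map_hull (f : E →ₗ[ℝ] F) (s : Set E) : (hull ℝ s).map f = hull ℝ (f '' s) :=
  Submodule.map_span _ _

lemma nonneg_of_mem_hull {f : E →ₗ[ℝ] ℝ} {s : Set E} (hf : ∀ v ∈ s, 0 ≤ f v) {x : E}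
    (hx : x ∈ hull ℝ s) : 0 ≤ f x :=
  (Submodule.span_le (p := (positive ℝ ℝ).comap f)).2 hf hx

lemma exists_smul_of_mem_hull {K : Set E} (hK : Convex ℝ K) (hK0 : 0 ∈ K) {x : E}
    (hx : x ∈ hull ℝ K) : ∃ t : ℝ, 0 ≤ t ∧ x ∈ t • K := by
  induction hx using Submodule.span_induction with
  | mem x hx => exact ⟨1, zero_le_one, by simpa⟩
  | zero => exact ⟨0, le_rfl, 0, hK0, smul_zero _⟩
  | add x y _ _ hx hy =>
    obtain ⟨s, hs, hx⟩ := hx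
    obtain ⟨t, ht, hy⟩ := hy
    exact ⟨s + t, by positivity, hK.add_smul hs ht ▸ Set.add_mem_add hx hy⟩
  | smul r x _ hx =>
    obtain ⟨s, hs, k, hk, rfl⟩ := hx
    exact ⟨r * s, mul_nonneg r.2 hs, k, hk, mul_smul (r : ℝ) s k⟩

lemma exists_sub_mul_eq_zero {ι : Type*} {s : Finset ι} {κ δ : ι → ℝ} (hκ : ∀ i ∈ s, 0 ≤ κ i)
    (hδ : ∃ i ∈ s, 0 < δ i) :
    ∃ μ, 0 ≤ μ ∧ (∀ i ∈ s, 0 ≤ κ i - μ * δ i) ∧ ∃ i ∈ s, 0 < δ i ∧ κ i - μ * δ i = 0 := by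
  obtain ⟨i₀, hi₀, hmin⟩ := {i ∈ s | 0 < δ i}.exists_min_image (fun i => κ i / δ i)
    (by simpa [Finset.Nonempty] using hδ)
  obtain ⟨his, hi⟩ := Finset.mem_filter.1 hi₀
  refine ⟨κ i₀ / δ i₀, div_nonneg (hκ _ his) hi.le, fun i hi' => ?_, i₀, his, hi, ?_⟩
  · rcases lt_or_ge 0 (δ i) with h | h
    · have := (le_div_iff₀ h).1 (hmin i (Finset.mem_filter.2 ⟨hi', h⟩))
      linarith
    · have := mul_nonpos_of_nonneg_of_nonpos (div_nonneg (hκ _ his) hi.le) h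
      linarith [hκ i hi']
  · rw [div_mul_cancel₀ _ hi.ne', sub_self]

lemma neg_mem_hull_image {f : E →ₗ[ℝ] F} {t : Finset E} {c : E → ℝ} (hc : ∀ v ∈ t, 0 ≤ c v)
    (hsum : f (∑ v ∈ t, c v • v) = 0) {p : E} (hp : p ∈ t) (hcp : 0 < c p) :
    -f p ∈ hull ℝ (f '' t) := by
  classical
  rw [← Finset.add_sum_erase t _ hp, map_add, map_smul] at hsum
  have hneg : -f p = f ((c p)⁻¹ • ∑ v ∈ t.erase p, c v • v) := by
    rw [map_smul, eq_neg_of_add_eq_zero_right hsum, smul_neg, inv_smul_smul₀ hcp.ne']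
  rw [hneg, ← map_hull]
  refine Submodule.mem_map_of_mem (PointedCone.smul_mem _ (by positivity) (sum_mem fun v hv => ?_))
  have hv := Finset.mem_of_mem_erase hv
  exact PointedCone.smul_mem _ (hc v hv) (subset_hull hv)

lemma exists_sub_smul_mem_hull_erase [DecidableEq E] {t : Finset E} {κ δ : E → ℝ}
    (hκ : ∀ v ∈ t, 0 ≤ κ v) (hδ : ∃ v ∈ t, 0 < δ v) :
    ∃ μ : ℝ, 0 ≤ μ ∧ ∃ u ∈ t,
      ∑ v ∈ t, κ v • v - μ • ∑ v ∈ t, δ v • v ∈ hull ℝ (t.erase u : Set E) := by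
  obtain ⟨μ, hμ, hnn, u, hu, -, hu0⟩ := exists_sub_mul_eq_zero hκ hδ
  refine ⟨μ, hμ, u, hu, mem_hull_finset.2
    ⟨fun v => κ v - μ * δ v, fun v hv => hnn v (Finset.mem_of_mem_erase hv), ?_⟩⟩
  rw [Finset.sum_erase _ (by simp only [hu0, zero_smul])]
  simp only [sub_smul, mul_smul, Finset.sum_sub_distrib, Finset.smul_sum]

/-- **Farkas' lemma**, by projecting the generators along one of them. -/
theorem exists_nonneg_neg_of_notMem_hull {T : Set E} (hT : T.Finite) {x : E}
    (hx : x ∉ hull ℝ T) : ∃ f : E →ₗ[ℝ] ℝ, (∀ v ∈ T, 0 ≤ f v) ∧ f x < 0 := by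
  classical
  suffices H : ∀ (s : Finset E) (φ : E →ₗ[ℝ] E) (x : E), x ∉ hull ℝ (φ '' s) →
      ∃ f : E →ₗ[ℝ] ℝ, (∀ v ∈ s, 0 ≤ f (φ v)) ∧ f x < 0 by
    obtain ⟨f, hf, hfx⟩ := H hT.toFinset LinearMap.id x (by simpa using hx)
    exact ⟨f, fun v hv => hf v (hT.mem_toFinset.2 hv), hfx⟩
  intro s
  induction s using Finset.induction with
  | empty =>
    intro φ x hx
    have hx0 : x ≠ 0 := by simpa using hx
    obtain ⟨f, hf⟩ := not_forall.1 (mt (Module.forall_dual_apply_eq_zero_iff ℝ x).1 hx0)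
    rcases lt_or_gt_of_ne hf with h | h
    · exact ⟨f, by simp, h⟩
    · exact ⟨-f, by simp, by simpa using h⟩
  | insert u s _ ih =>
    intro φ x hx
    have hsub : φ '' s ⊆ φ '' (insert u s : Finset E) := by gcongr; simp
    obtain ⟨f, hf, hfx⟩ := ih φ x fun h => hx (Submodule.span_mono hsub h)
    rcases le_or_gt 0 (f (φ u)) with hfu | hfu
    · exact ⟨f, by simpa using ⟨hfu, hf⟩, hfx⟩
    let ρ : E →ₗ[ℝ] E := LinearMap.id - (f.smulRight ((f (φ u))⁻¹ • φ u))
    have hρ (y : E) : y = ρ y + (f y / f (φ u)) • φ u := by simp [ρ, smul_smul, div_eq_mul_inv]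
    have hρu : ρ (φ u) = 0 := by simp [ρ, smul_smul, hfu.ne]
    obtain ⟨g, hg, hgx⟩ := ih (ρ ∘ₗ φ) (ρ x) fun h => hx <| by
      have hu' : φ u ∈ hull ℝ (φ '' (insert u s : Finset E)) := subset_hull ⟨u, by simp, rfl⟩
      have hle : hull ℝ ((ρ ∘ₗ φ) '' s) ≤ hull ℝ (φ '' (insert u s : Finset E)) := by
        refine Submodule.span_le.2 ?_
        rintro _ ⟨v, hv, rfl⟩
        have hv' : ρ (φ v) = φ v + (-(f (φ v) / f (φ u))) • φ u := by
          rw [neg_smul, ← sub_eq_add_neg, eq_sub_iff_add_eq]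
          exact (hρ _).symm
        rw [LinearMap.comp_apply, hv']
        exact add_mem (subset_hull (hsub ⟨v, hv, rfl⟩)) <| PointedCone.smul_mem _
          (neg_nonneg.2 (div_nonpos_of_nonneg_of_nonpos (hf v hv) hfu.le)) hu'
      rw [hρ x]
      exact add_mem (hle h) (PointedCone.smul_mem _ (div_nonneg_of_nonpos hfx.le hfu.le) hu')
    exact ⟨g ∘ₗ ρ, by simpa [hρu] using hg, hgx⟩

theorem exists_nonneg_ne_zero_of_hull_ne_top {T : Set E} (hT : T.Finite) (h : hull ℝ T ≠ ⊤) :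
    ∃ f : E →ₗ[ℝ] ℝ, f ≠ 0 ∧ ∀ v ∈ T, 0 ≤ f v := by
  obtain ⟨x, hx⟩ := SetLike.exists_not_mem_of_ne_top _ h rfl
  obtain ⟨f, hf, hfx⟩ := exists_nonneg_neg_of_notMem_hull hT hx
  exact ⟨f, by rintro rfl; simp at hfx, hf⟩

/-- **Carathéodory's theorem** for cones. -/
theorem exists_linearIndepOn_mem_hull {s : Set E} {x : E} (hx : x ∈ hull ℝ s) :
    ∃ t : Finset E, (t : Set E) ⊆ s ∧ LinearIndepOn ℝ id (t : Set E) ∧ x ∈ hull ℝ (t : Set E) := by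
  classical
  obtain ⟨t, ⟨hts, hxt⟩, hmin⟩ := wellFounded_lt.has_min
    {t : Finset E | (t : Set E) ⊆ s ∧ x ∈ hull ℝ (t : Set E)}
    (Submodule.mem_span_finite_of_mem_span hx)
  refine ⟨t, hts, ?_, hxt⟩
  obtain ⟨c, hc, rfl⟩ := mem_hull_finset.1 hxt
  by_contra hdep
  obtain ⟨δ, hδ, hpos⟩ : ∃ δ : E → ℝ, ∑ v ∈ t, δ v • v = 0 ∧ ∃ v ∈ t, 0 < δ v := by
    obtain ⟨δ, hδ, v, hv, hδv⟩ := not_linearIndepOn_finset_iff.1 hdep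
    rcases lt_or_gt_of_ne hδv with h | h
    · exact ⟨-δ, by simpa using hδ, v, hv, by simpa using h⟩
    · exact ⟨δ, hδ, v, hv, h⟩
  obtain ⟨μ, -, u, hu, hmem⟩ := exists_sub_smul_mem_hull_erase hc hpos
  rw [hδ, smul_zero, sub_zero] at hmem
  exact hmin (t.erase u) ⟨fun v hv => hts (Finset.mem_of_mem_erase hv), hmem⟩
    (Finset.erase_ssubset hu)

theorem exists_basis_of_linearIndepOn [FiniteDimensional ℝ E] {ι : Type*} [Fintype ι]
    (hι : Fintype.card ι = Module.finrank ℝ E) {s B : Set E} (hs : LinearIndepOn ℝ id s)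
    (hsB : s ⊆ B) (hB : Submodule.span ℝ B = ⊤) :
    ∃ e : Module.Basis ι ℝ E, (∀ i, e i ∈ B) ∧ s ⊆ Set.range e := by
  obtain ⟨b, hbB, hsb, hBb, hb⟩ := exists_linearIndepOn_id_extension hs hsB
  have htop : ⊤ ≤ Submodule.span ℝ (Set.range ((↑) : b → E)) := by
    rw [Subtype.range_coe, ← hB]
    exact Submodule.span_le.2 hBb
  let e := Module.Basis.mk hb.linearIndependent htop
  have : Fintype b := FiniteDimensional.fintypeBasisIndex e
  let σ : b ≃ ι := Fintype.equivOfCardEq (by rw [hι, Module.finrank_eq_card_basis e])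
  refine ⟨e.reindex σ, fun i => ?_, fun v hv => ⟨σ ⟨v, hsb hv⟩, ?_⟩⟩
  · simpa [e] using hbB (σ.symm i).2
  · simp [e]

theorem exists_basis_of_mem_hull [FiniteDimensional ℝ E] {ι : Type*} [Fintype ι]
    (hι : Fintype.card ι = Module.finrank ℝ E) {A B : Set E} (hAB : A ⊆ B)
    (hB : Submodule.span ℝ B = ⊤) {x : E} (hx : x ∈ hull ℝ A) :
    ∃ e : Module.Basis ι ℝ E, (∀ i, e i ∈ B) ∧
      ∀ i, 0 ≤ e.repr x i ∧ (e.repr x i ≠ 0 → e i ∈ A) := by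
  obtain ⟨t, htA, hli, hxt⟩ := exists_linearIndepOn_mem_hull hx
  obtain ⟨e, heB, hte⟩ := exists_basis_of_linearIndepOn hι hli (htA.trans hAB) hB
  obtain ⟨c, hc, rfl⟩ := mem_hull_finset.1 hxt
  have hrepr (i : ι) : e.repr (∑ v ∈ t, c v • v) i = ∑ v ∈ t, c v * e.repr v i := by
    simp [Finsupp.finsetSum_apply]
  have hrepr_mem {v : E} (hv : v ∈ t) (i : ι) : e.repr v i = 0 ∨ e.repr v i = 1 ∧ e i = v := by
    classical
    obtain ⟨l, rfl⟩ := hte hv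
    rw [e.repr_self, Finsupp.single_apply]
    split_ifs with h
    · exact .inr ⟨rfl, h ▸ rfl⟩
    · exact .inl rfl
  refine ⟨e, heB, fun i => ?_⟩
  rw [hrepr]
  refine ⟨Finset.sum_nonneg fun v hv => mul_nonneg (hc v hv) ?_, fun h => ?_⟩
  · rcases hrepr_mem hv i with h | ⟨h, -⟩ <;> simp [h]
  · obtain ⟨v, hv, hvi⟩ := Finset.exists_ne_zero_of_sum_ne_zero h
    rcases hrepr_mem hv i with h | ⟨-, rfl⟩
    · simp [h] at hvi
    · exact htA hv

/-- A vertex of a polyhedron of linear functionals: as long as the zeros in `T` do not span a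
complement of `W`, the functional can be moved, without decreasing at `x`, until it acquires a new
zero. -/
theorem exists_nonneg_sup_span_zeros_eq_top {T : Set E} (hT : T.Finite) {f : E →ₗ[ℝ] ℝ}
    (hf : ∀ v ∈ T, 0 ≤ f v) (W : Submodule ℝ E) (x : E)
    (hη : ∀ η : E →ₗ[ℝ] ℝ, η ≠ 0 → (∀ w ∈ W, η w = 0) → ∃ v ∈ T, η v ≠ 0 ∧ η v * η x ≤ 0) :
    ∃ g : E →ₗ[ℝ] ℝ, (∀ v ∈ T, 0 ≤ g v) ∧ (∀ w ∈ W, g w = f w) ∧ f x ≤ g x ∧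
      W ⊔ Submodule.span ℝ {v ∈ T | g v = 0} = ⊤ := by
  let 𝒢 : Set (E →ₗ[ℝ] ℝ) := {g | (∀ v ∈ T, 0 ≤ g v) ∧ (∀ w ∈ W, g w = f w) ∧ f x ≤ g x}
  have hfin : ((fun g : E →ₗ[ℝ] ℝ => {v ∈ T | g v = 0}) '' 𝒢).Finite :=
    hT.finite_subsets.subset (Set.image_subset_iff.2 fun g _ => Set.sep_subset _ _)
  obtain ⟨_, ⟨g, ⟨hg, hgW, hgx⟩, rfl⟩, hmax⟩ :=
    hfin.exists_maximal ⟨_, f, ⟨hf, fun _ _ => rfl, le_rfl⟩, rfl⟩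
  refine ⟨g, hg, hgW, hgx, ?_⟩
  by_contra hne
  obtain ⟨η, hη0, hker⟩ := Submodule.exists_le_ker_of_lt_top _ (Ne.lt_top hne)
  have hηW : ∀ w ∈ W, η w = 0 := fun w hw => hker (Submodule.mem_sup_left hw)
  have hηZ : ∀ v ∈ {v ∈ T | g v = 0}, η v = 0 := fun v hv =>
    hker (Submodule.mem_sup_right (Submodule.subset_span hv))
  obtain ⟨δ, hδW, hδZ, hδx, hδpos⟩ : ∃ δ : E →ₗ[ℝ] ℝ, (∀ w ∈ W, δ w = 0) ∧
      (∀ v ∈ {v ∈ T | g v = 0}, δ v = 0) ∧ δ x ≤ 0 ∧ ∃ v ∈ hT.toFinset, 0 < δ v := by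
    obtain ⟨v, hv, hv0, hvx⟩ := hη η hη0 hηW
    have hv' := hT.mem_toFinset.2 hv
    rcases lt_or_gt_of_ne hv0 with h | h
    · refine ⟨-η, fun w hw => ?_, fun w hw => ?_, ?_, v, hv', by simpa using h⟩
      · simp [hηW w hw]
      · simp [hηZ w hw]
      · simpa using nonneg_of_mul_nonpos_right hvx h
    · exact ⟨η, hηW, hηZ, nonpos_of_mul_nonpos_right hvx h, v, hv', h⟩
  obtain ⟨μ, hμ, hnn, u, hu, hδu, hu0⟩ :=
    exists_sub_mul_eq_zero (κ := g) (fun v hv => hg v (hT.mem_toFinset.1 hv)) hδpos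
  have hgood : g - μ • δ ∈ 𝒢 := by
    refine ⟨fun v hv => hnn v (hT.mem_toFinset.2 hv), fun w hw => ?_, ?_⟩
    · simp [hδW w hw, hgW w hw]
    · have := mul_nonpos_of_nonneg_of_nonpos hμ hδx
      simp only [LinearMap.sub_apply, LinearMap.smul_apply, smul_eq_mul]
      linarith
  have hle := hmax ⟨_, hgood, rfl⟩ fun v hv => ⟨hv.1, by simp [hδZ v hv, hv.2]⟩
  exact hδu.ne' (hδZ u (hle ⟨hT.mem_toFinset.1 hu, hu0⟩))

theorem exists_basis_repr_nonneg [FiniteDimensional ℝ E] {ι : Type*} [Fintype ι]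
    (hι : Fintype.card ι = Module.finrank ℝ E) {T : Set E} (hT : T.Finite)
    (hspan : Submodule.span ℝ T = ⊤) (hne : hull ℝ T ≠ ⊤) :
    ∃ e : Module.Basis ι ℝ E, (∀ i, e i ∈ T) ∧ ∃ i, ∀ t ∈ T, 0 ≤ e.repr t i := by
  have hker {η : E →ₗ[ℝ] ℝ} (hη : η ≠ 0) : ∃ t ∈ T, η t ≠ 0 := by
    by_contra! h
    exact hη (LinearMap.ext_on hspan h)
  obtain ⟨f, hf, hfT⟩ := exists_nonneg_ne_zero_of_hull_ne_top hT hne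
  obtain ⟨t, htT, hft⟩ := hker hf
  obtain ⟨g, hgT, hgt, -, hgspan⟩ := exists_nonneg_sup_span_zeros_eq_top hT hfT
    (Submodule.span ℝ {t}) 0 fun η hη _ => by simpa using hker hη
  replace hgt : 0 < g t := (hgt t (Submodule.mem_span_singleton_self t)).symm ▸
    (hfT t htT).lt_of_ne' hft
  have ht0 : t ≠ 0 := by rintro rfl; simp at hgt
  obtain ⟨e, heB, hte⟩ := exists_basis_of_linearIndepOn hι (s := {t})
    (B := {t} ∪ {v ∈ T | g v = 0}) (by simpa [linearIndepOn_singleton_iff] using ht0)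
    Set.subset_union_left (by rwa [Submodule.span_union])
  obtain ⟨i, rfl⟩ := hte rfl
  refine ⟨e, fun j => (heB j).elim (fun h => h ▸ htT) fun h => h.1, i, fun x hx => ?_⟩
  have hg : g x = e.repr x i * g (e i) := by
    conv_lhs => rw [← e.sum_repr x, map_sum]
    refine (Finset.sum_eq_single i (fun j _ hji => ?_) (by simp)).trans (map_smul g _ _)
    rw [map_smul, ((heB j).resolve_left fun h => hji (e.injective h)).2, smul_zero]
  exact nonneg_of_mul_nonneg_left (hg ▸ hgT x hx) hgt

end Cones

/-! ### Extending a functional from a subspace -/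

section Extension

open PointedCone

variable {E : Type*} [AddCommGroup E] [Module ℝ E] {T : Set E} {W : Submodule ℝ E}
  {ψ : W →ₗ[ℝ] ℝ}

lemma exists_nonneg_extension (hW : ∀ x, ∃ s ∈ hull ℝ T, s - x ∈ W)
    (hψ : ∀ w : W, (w : E) ∈ hull ℝ T → 0 ≤ ψ w) :
    ∃ f : E →ₗ[ℝ] ℝ, (∀ v ∈ T, 0 ≤ f v) ∧ ∀ w : W, f w = ψ w := by
  obtain ⟨f, hf, hfT⟩ := riesz_extension (hull ℝ T) ⟨W, ψ⟩ hψ fun y => by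
    obtain ⟨s, hs, hsy⟩ := hW y
    exact ⟨⟨s - y, hsy⟩, by simpa using hs⟩
  exact ⟨f, fun v hv => hfT v (PointedCone.subset_hull hv), hf⟩

lemma exists_ne_zero_mul_nonpos (hW : ∀ x, ∃ s ∈ hull ℝ T, s - x ∈ W) (x : E) {η : E →ₗ[ℝ] ℝ}
    (hη : η ≠ 0) (hηW : ∀ w ∈ W, η w = 0) : ∃ v ∈ T, η v ≠ 0 ∧ η v * η x ≤ 0 := by
  have hηs {s y : E} (h : s - y ∈ W) : η s = η y := by
    simpa [sub_eq_zero] using hηW _ h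
  by_contra! h
  have hηx : η x = 0 := by
    obtain ⟨s, hs, hsx⟩ := hW (-x)
    have h0 : 0 ≤ (η x • η) s := nonneg_of_mem_hull (fun v hv => by
      by_cases hv0 : η v = 0
      · simp [hv0]
      · simpa [mul_comm] using (h v hv hv0).le) hs
    rw [LinearMap.smul_apply, hηs hsx, map_neg, smul_eq_mul] at h0
    nlinarith
  refine hη (LinearMap.ext fun y => ?_)
  obtain ⟨s, hs, hsy⟩ := hW y
  have hT0 : hull ℝ T ≤ (LinearMap.ker η).restrictScalars _ := Submodule.span_le.2 fun v hv => by
    by_contra hv0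
    simpa [hηx] using h v hv hv0
  rw [← hηs hsy]
  exact hT0 hs

/-- The extensions of `ψ` to `E` that are nonnegative on `T` and are vertices of the polyhedron of
all such extensions: they are determined by `ψ` and their zeros in `T`. -/
def basicExtensions (T : Set E) (ψ : W →ₗ[ℝ] ℝ) : Set (E →ₗ[ℝ] ℝ) :=
  {f | (∀ v ∈ T, 0 ≤ f v) ∧ (∀ w : W, f w = ψ w) ∧ W ⊔ Submodule.span ℝ {v ∈ T | f v = 0} = ⊤}

lemma finite_basicExtensions (hT : T.Finite) : (basicExtensions T ψ).Finite := by
  refine .of_finite_image (f := fun f => {v ∈ T | f v = 0})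
    (hT.finite_subsets.subset (Set.image_subset_iff.2 fun f _ => Set.sep_subset _ _)) ?_
  intro f hf g hg (hfg : {v ∈ T | f v = 0} = {v ∈ T | g v = 0})
  refine LinearMap.ext_on (s := W ∪ {v ∈ T | f v = 0})
    (by rw [Submodule.span_union, Submodule.span_eq, hf.2.2]) ?_
  rintro x (hx | hx)
  · exact (hf.2.1 ⟨x, hx⟩).trans (hg.2.1 ⟨x, hx⟩).symm
  · exact hx.2.trans (hfg.le hx).2.symm

lemma exists_basicExtension_ge (hT : T.Finite) (hW : ∀ x, ∃ s ∈ hull ℝ T, s - x ∈ W)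
    {f : E →ₗ[ℝ] ℝ} (hfT : ∀ v ∈ T, 0 ≤ f v) (hfψ : ∀ w : W, f w = ψ w) (x : E) :
    ∃ g ∈ basicExtensions T ψ, f x ≤ g x := by
  obtain ⟨g, hgT, hgW, hfg, hg⟩ := exists_nonneg_sup_span_zeros_eq_top hT hfT W x
    fun _ => exists_ne_zero_mul_nonpos hW x
  exact ⟨g, ⟨hgT, fun w => (hgW w w.2).trans (hfψ w), hg⟩, hfg⟩

lemma exists_pos_nonneg_add_smul (hT : T.Finite) {f η : E →ₗ[ℝ] ℝ} (hf : ∀ v ∈ T, 0 ≤ f v)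
    (hη : ∀ v ∈ T, f v = 0 → 0 ≤ η v) : ∃ ε : ℝ, 0 < ε ∧ ∀ v ∈ T, 0 ≤ (f + ε • η) v := by
  have hev : ∀ᶠ ε : ℝ in nhdsWithin 0 (Set.Ioi 0), ∀ v ∈ T, 0 ≤ (f + ε • η) v := by
    refine hT.eventually_all.2 fun v hv => ?_
    obtain hv0 | hv0 := (hf v hv).eq_or_lt
    · filter_upwards [self_mem_nhdsWithin] with ε hε
      simpa [← hv0] using mul_nonneg (le_of_lt hε) (hη v hv hv0.symm)
    · have hcont : Continuous fun ε : ℝ => (f + ε • η) v := by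
        simp only [LinearMap.add_apply, LinearMap.smul_apply]
        fun_prop
      exact ((hcont.tendsto' 0 (f v) (by simp)).eventually_const_le hv0).filter_mono
        nhdsWithin_le_nhds
  exact (hev.and self_mem_nhdsWithin).exists.imp fun ε hε => hε.symm

lemma exists_basicExtension_gt (hT : T.Finite) (hW : ∀ x, ∃ s ∈ hull ℝ T, s - x ∈ W)
    {f : E →ₗ[ℝ] ℝ} (hf : f ∈ basicExtensions T ψ) {x : E}
    (hx : ∀ s ∈ hull ℝ {v ∈ T | f v = 0}, s + x ∉ W) : ∃ g ∈ basicExtensions T ψ, f x < g x := by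
  obtain ⟨h, hh, hhx⟩ := exists_nonneg_neg_of_notMem_hull (x := W.mkQ (-x))
    ((hT.subset (Set.sep_subset T fun v => f v = 0)).image W.mkQ) fun hmem => by
      rw [← map_hull] at hmem
      obtain ⟨s, hs, hsx⟩ := hmem
      refine hx s hs ((Submodule.Quotient.mk_eq_zero W).1 ?_)
      simpa [← sub_eq_zero] using hsx
  obtain ⟨ε, hε, hεT⟩ := exists_pos_nonneg_add_smul hT (η := h ∘ₗ W.mkQ) hf.1
    fun v hv hv0 => hh _ ⟨v, ⟨hv, hv0⟩, rfl⟩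
  obtain ⟨g, hg, hgx⟩ := exists_basicExtension_ge (ψ := ψ) hT hW hεT (fun w => by
    simp [hf.2.1 w, (Submodule.Quotient.mk_eq_zero W).2 w.2]) x
  refine ⟨g, hg, lt_of_lt_of_le ?_ hgx⟩
  have : 0 < ε * h (W.mkQ x) := mul_pos hε (by simpa using hhx)
  simpa using this

theorem exists_basicExtension_le_apply [TopologicalSpace E] [IsTopologicalAddGroup E]
    [ContinuousSMul ℝ E] [T2Space E] [FiniteDimensional ℝ E] (hT : T.Finite)
    (hW : ∀ x, ∃ s ∈ hull ℝ T, s - x ∈ W) (hψ : ∀ w : W, (w : E) ∈ hull ℝ T → 0 ≤ ψ w) {K : Set E}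
    (hK : IsCompact K) (hKne : K.Nonempty) :
    ∃ f ∈ basicExtensions T ψ, ∃ x ∈ K, (∀ y ∈ K, f y ≤ f x) ∧
      ∃ s ∈ hull ℝ {v ∈ T | f v = 0}, s + x ∈ W := by
  obtain ⟨f₀, hf₀T, hf₀ψ⟩ := exists_nonneg_extension hW hψ
  obtain ⟨f₁, hf₁, -⟩ := exists_basicExtension_ge hT hW hf₀T hf₀ψ 0
  choose q hqK hqmax using fun f : E →ₗ[ℝ] ℝ =>
    hK.exists_isMaxOn hKne f.continuous_of_finiteDimensional.continuousOn
  obtain ⟨f, hf, hfmax⟩ :=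
    (finite_basicExtensions hT).exists_maximalFor (fun f => f (q f)) (basicExtensions T ψ) ⟨f₁, hf₁⟩
  refine ⟨f, hf, q f, hqK f, hqmax f, ?_⟩
  by_contra! h
  obtain ⟨g, hg, hgt⟩ := exists_basicExtension_gt hT hW hf h
  have hgq : g (q f) ≤ g (q g) := hqmax g (hqK f)
  linarith [hfmax hg (hgt.le.trans hgq)]

end Extension

/-! ### Lattices and rational subspaces -/

/-- The lattice `ℤ^ι` of integral points of `ℝ^ι`. -/
def stdLattice (ι : Type*) [Finite ι] : Submodule ℤ (ι → ℝ) :=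
  Submodule.span ℤ (Set.range (Pi.basisFun ℝ ι))

section Lattice

open Module

variable {ι : Type*}

instance [Finite ι] : DiscreteTopology (stdLattice ι) := by
  cases nonempty_fintype ι
  exact inferInstanceAs (DiscreteTopology (Submodule.span ℤ (Set.range (Pi.basisFun ℝ ι))))

instance [Fintype ι] : IsZLattice ℝ (stdLattice ι) :=
  inferInstanceAs (IsZLattice ℝ (Submodule.span ℤ (Set.range (Pi.basisFun ℝ ι))))

lemma mem_stdLattice [Finite ι] {x : ι → ℝ} : x ∈ stdLattice ι ↔ ∀ i, ∃ m : ℤ, x i = m := by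
  simp [stdLattice, Basis.mem_span_iff_repr_mem, eq_comm]

variable [Fintype ι]

lemma exists_det_eq_intCast [DecidableEq ι] {v : ι → ι → ℝ} (hv : ∀ i, v i ∈ stdLattice ι) :
    ∃ m : ℤ, (Pi.basisFun ℝ ι).det v = m := by
  choose A hA using fun i => mem_stdLattice.1 (hv i)
  refine ⟨(Matrix.of A).det, ?_⟩
  rw [Pi.basisFun_det_apply, Int.cast_det]
  exact congrArg _ (Matrix.ext hA)

variable {E : Type*} [NormedAddCommGroup E] [NormedSpace ℝ E]

/-- A subspace is rational with respect to the lattice `L` if it is spanned by lattice vectors. -/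
def IsRational (L : Submodule ℤ E) (W : Submodule ℝ E) : Prop :=
  Submodule.span ℝ (L ∩ W : Set E) = W

/-- The linear map `π` identifies the quotient by `W` of the pair `(E, L)` with the pair
`(ℝ^ι, ℤ^ι)`. -/
structure IsQuotientCoord (L : Submodule ℤ E) (W : Submodule ℝ E) (π : E →ₗ[ℝ] (ι → ℝ)) :
    Prop where
  ker_eq : LinearMap.ker π = W
  map_eq : L.map (π.restrictScalars ℤ) = stdLattice ι

variable {L : Submodule ℤ E} {W : Submodule ℝ E}

lemma IsQuotientCoord.apply_mem {π : E →ₗ[ℝ] (ι → ℝ)} (hπ : IsQuotientCoord L W π) {x : E}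
    (hx : x ∈ L) : π x ∈ stdLattice ι :=
  hπ.map_eq ▸ ⟨x, hx, rfl⟩

lemma IsQuotientCoord.exists_apply_eq {π : E →ₗ[ℝ] (ι → ℝ)} (hπ : IsQuotientCoord L W π)
    {y : ι → ℝ} (hy : y ∈ stdLattice ι) : ∃ x ∈ L, π x = y :=
  Submodule.mem_map.1 (hπ.map_eq.ge hy)

lemma IsQuotientCoord.apply_eq_zero {π : E →ₗ[ℝ] (ι → ℝ)} (hπ : IsQuotientCoord L W π) {x : E} :
    π x = 0 ↔ x ∈ W := by
  rw [← LinearMap.mem_ker, hπ.ker_eq]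

lemma IsQuotientCoord.range_eq {π : E →ₗ[ℝ] (ι → ℝ)} (hπ : IsQuotientCoord L W π) :
    LinearMap.range π = ⊤ := by
  rw [eq_top_iff, ← IsZLattice.span_top (K := ℝ) (L := stdLattice ι), Submodule.span_le]
  exact fun y hy => (hπ.exists_apply_eq hy).imp fun x hx => hx.2

lemma isRational_span {s : Set E} (hs : s ⊆ L) : IsRational L (Submodule.span ℝ s) :=
  le_antisymm (Submodule.span_le.2 Set.inter_subset_right)
    (Submodule.span_mono fun _ hx => ⟨hs hx, Submodule.subset_span hx⟩)

lemma IsRational.sup_span_singleton (hW : IsRational L W) {y : E} (hy : y ∈ L) :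
    IsRational L (W ⊔ Submodule.span ℝ {y}) := by
  rw [← hW, ← Submodule.span_union]
  exact isRational_span (Set.union_subset Set.inter_subset_left (by simpa using hy))

instance [DiscreteTopology L] : DiscreteTopology (ZLattice.comap ℝ L W.subtype) :=
  ZLattice.comap_discreteTopology ℝ L continuous_subtype_val Subtype.val_injective

lemma isZLattice_comap_subtype [DiscreteTopology L] (hW : IsRational L W) :
    IsZLattice ℝ (ZLattice.comap ℝ L W.subtype) := by
  refine ⟨Submodule.map_injective_of_injective W.injective_subtype ?_⟩
  rw [Submodule.map_span, ZLattice.coe_comap, Submodule.map_subtype_top]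
  refine Eq.trans ?_ hW
  rw [Set.inter_comm]
  exact congrArg _ (Subtype.image_preimage_coe (W : Set E) L)

variable [FiniteDimensional ℝ E]

lemma IsRational.finrank_inf [DiscreteTopology L] (hW : IsRational L W) :
    finrank ℤ ↥(L ⊓ W.restrictScalars ℤ) = finrank ℝ W := by
  have hspan : Submodule.span ℤ (L ∩ W : Set E) = L ⊓ W.restrictScalars ℤ :=
    Submodule.span_eq (L ⊓ W.restrictScalars ℤ)
  have : DiscreteTopology (Submodule.span ℤ (L ∩ W : Set E)) :=
    hspan ▸ DiscreteTopology.of_subset (s := (L : Set E)) ‹_› Set.inter_subset_left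
  have := Real.finrank_eq_int_finrank_of_discrete this
  rw [Set.finrank, Set.finrank, hspan, hW] at this
  exact this.symm

lemma IsRational.finrank_map_mkQ_add_finrank [DiscreteTopology L] [IsZLattice ℝ L]
    (hW : IsRational L W) :
    finrank ℤ (L.map (W.mkQ.restrictScalars ℤ)) + finrank ℝ W = finrank ℝ E := by
  let f : L →ₗ[ℤ] E ⧸ W := (W.mkQ.restrictScalars ℤ).domRestrict L
  have hker : (LinearMap.ker f).map L.subtype = L ⊓ W.restrictScalars ℤ := by
    ext x
    simp [f, and_comm]
  have h := Submodule.finrank_quotient_add_finrank (LinearMap.ker f)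
  rwa [f.quotKerEquivRange.finrank_eq, ZLattice.rank ℝ L, ← Submodule.finrank_map_subtype_eq, hker,
    hW.finrank_inf, LinearMap.range_domRestrict] at h

theorem IsRational.exists_isQuotientCoord [DiscreteTopology L] [IsZLattice ℝ L]
    (hW : IsRational L W) (hι : Fintype.card ι + finrank ℝ W = finrank ℝ E) :
    ∃ π : E →ₗ[ℝ] (ι → ℝ), IsQuotientCoord L W π := by
  classical
  set Λ := L.map (W.mkQ.restrictScalars ℤ) with hΛ
  have hrank : finrank ℤ Λ = Fintype.card ι := by
    have : finrank ℤ Λ + _ = _ := hW.finrank_map_mkQ_add_finrank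
    omega
  have : Module.Finite ℤ Λ := .map L _
  have : IsTorsionFree ℤ (E ⧸ W) := .trans ℝ
  let b : Basis ι ℤ Λ := (finBasisOfFinrankEq ℤ _ hrank).reindex (Fintype.equivFin ι).symm
  have hb : Submodule.span ℤ (Set.range fun i => (b i : E ⧸ W)) = Λ := by
    have h := congrArg (Submodule.map Λ.subtype) b.span_eq
    rwa [Submodule.map_span, ← Set.range_comp, Submodule.map_subtype_top] at h
  have hspan : ⊤ ≤ Submodule.span ℝ (Set.range fun i => (b i : E ⧸ W)) := by
    rw [← Submodule.range_mkQ W, LinearMap.range_eq_map, ← IsZLattice.span_top (K := ℝ) (L := L),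
      Submodule.map_span, Submodule.span_le]
    rintro _ ⟨x, hx, rfl⟩
    exact Submodule.span_subset_span ℤ ℝ _ (hb.ge ⟨x, hx, rfl⟩)
  have hcard : Fintype.card ι = finrank ℝ (E ⧸ W) := by
    have := W.finrank_quotient_add_finrank
    omega
  let e : Basis ι ℝ (E ⧸ W) := basisOfTopLeSpanOfCardEqFinrank _ hspan hcard
  refine ⟨e.equivFun ∘ₗ W.mkQ, by simp [LinearMap.ker_comp], ?_⟩
  have he : e.equivFun '' Set.range (fun i => (b i : E ⧸ W)) = Set.range (Pi.basisFun ℝ ι) := by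
    rw [← Set.range_comp]
    congr 1
    ext1 i
    have hei : e i = b i := congrFun (coe_basisOfTopLeSpanOfCardEqFinrank _ hspan hcard) i
    ext j
    rw [Function.comp_apply, ← hei, e.equivFun_self, Pi.basisFun_apply, Pi.single_apply]
    simp only [eq_comm]
  have hcomp : (e.equivFun ∘ₗ W.mkQ).restrictScalars ℤ =
      (e.equivFun.toLinearMap.restrictScalars ℤ) ∘ₗ (W.mkQ.restrictScalars ℤ) := rfl
  rw [hcomp, Submodule.map_comp, ← hΛ, ← hb, Submodule.map_span]
  exact congrArg _ he

end Lattice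

/-! ### The volume bound -/

section Minkowski

open Module MeasureTheory

variable {ι : Type*} [Fintype ι]

lemma convex_sum_abs_lt_one : Convex ℝ {x : ι → ℝ | ∑ i, |x i| < 1} := by
  intro x hx y hy s t hs ht hst
  calc ∑ i, |s * x i + t * y i| ≤ ∑ i, (s * |x i| + t * |y i|) := by
        gcongr with i
        exact (abs_add_le _ _).trans_eq
          (by rw [abs_mul, abs_mul, abs_of_nonneg hs, abs_of_nonneg ht])
    _ = s • ∑ i, |x i| + t • ∑ i, |y i| := by
        simp only [Finset.sum_add_distrib, Finset.mul_sum, smul_eq_mul]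
    _ < 1 := convex_Iio 1 hx hy hs ht hst

lemma volume_sum_abs_lt_one : volume {x : ι → ℝ | ∑ i, |x i| < 1} =
    ENNReal.ofReal (2 ^ Fintype.card ι / (Fintype.card ι).factorial) := by
  have h := volume_sum_rpow_lt_one ι le_rfl
  simp only [Real.rpow_one, div_one, Real.Gamma_nat_eq_factorial, one_add_one_eq_two,
    Real.Gamma_two, mul_one] at h
  exact h

variable [DecidableEq ι]

lemma exists_ne_zero_mem_span_sum_abs_lt_one (b : Basis ι ℝ (ι → ℝ))
    (hb : |(Matrix.of b).det| * (Fintype.card ι).factorial < 1) :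
    ∃ x ∈ Submodule.span ℤ (Set.range b), x ≠ 0 ∧ ∑ i, |x i| < 1 := by
  have : Countable (Submodule.span ℤ (Set.range b)).toAddSubgroup :=
    inferInstanceAs (Countable (Submodule.span ℤ (Set.range b)))
  obtain ⟨x, hx0, hx⟩ := exists_ne_zero_mem_lattice_of_measure_mul_two_pow_lt_measure
    (ZSpan.isAddFundamentalDomain' b volume) (by simp) convex_sum_abs_lt_one (by
      rw [volume_sum_abs_lt_one, ZSpan.volume_fundamentalDomain, finrank_fintype_fun_eq_card,
        ← ENNReal.ofReal_ofNat, ← ENNReal.ofReal_pow zero_le_two,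
        ← ENNReal.ofReal_mul (abs_nonneg _), ENNReal.ofReal_lt_ofReal_iff (by positivity),
        lt_div_iff₀ (by positivity)]
      nlinarith [pow_pos (zero_lt_two (α := ℝ)) (Fintype.card ι)])
  exact ⟨x, x.2, by simpa using hx0, hx⟩

theorem abs_det_le_factorial {d : ι → ι → ℝ}
    (hd : ∀ x : ι → ℝ, ∑ i, |x i| < 1 → ∑ i, x i • d i ∈ stdLattice ι → ∑ i, x i • d i = 0) :
    |(Pi.basisFun ℝ ι).det d| ≤ (Fintype.card ι).factorial := by
  by_contra! hlt
  obtain ⟨hli, hspan⟩ := (Basis.is_basis_iff_det (Pi.basisFun ℝ ι)).2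
    (isUnit_iff_ne_zero.2 <| abs_pos.1 <| (Nat.cast_nonneg _).trans_lt hlt)
  let e := Basis.mk hli hspan.ge
  let b := (Pi.basisFun ℝ ι).map e.equivFun
  have hdet : (Matrix.of b).det * (Pi.basisFun ℝ ι).det d = 1 := by
    have hb : Matrix.of b = (e.toMatrix (Pi.basisFun ℝ ι)).transpose := rfl
    rw [hb, Matrix.det_transpose, Basis.det_apply, ← Matrix.det_mul, ← Basis.coe_mk hli hspan.ge,
      Basis.toMatrix_mul_toMatrix_flip, Matrix.det_one]
  obtain ⟨x, hx, hx0, hx1⟩ := exists_ne_zero_mem_span_sum_abs_lt_one b <| by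
    calc |(Matrix.of b).det| * (Fintype.card ι).factorial
        < |(Matrix.of b).det| * |(Pi.basisFun ℝ ι).det d| := by
          gcongr
          exact abs_pos.2 (left_ne_zero_of_mul_eq_one hdet)
      _ = 1 := by rw [← abs_mul, hdet, abs_one]
  have hsum : e.equivFun.symm x = ∑ i, x i • d i := by simp [e, Basis.equivFun_symm_apply]
  have hmem := Submodule.mem_map_of_mem (f := e.equivFun.symm.toLinearMap.restrictScalars ℤ) hx
  have hb : e.equivFun.symm ∘ b = Pi.basisFun ℝ ι := funext fun i => by simp [b]
  rw [Submodule.map_span, ← Set.range_comp] at hmem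
  refine hx0 (e.equivFun.symm.map_eq_zero_iff.1 (hsum ▸ hd x hx1 (hsum ▸ ?_)))
  exact (congrArg (fun f => e.equivFun.symm x ∈ Submodule.span ℤ (Set.range f)) hb).mp hmem

end Minkowski

/-! ### Packing or covering -/

section Packing

open Module

variable {E : Type*} [NormedAddCommGroup E] [NormedSpace ℝ E] {L : Submodule ℤ E}
  {W : Submodule ℝ E} {K P : Set E}

/-- The translates of the image of `P` in `E ⧸ W` by the distinct elements of the image of `L` are
pairwise disjoint. -/
def IsPacking (L : Submodule ℤ E) (W : Submodule ℝ E) (P : Set E) : Prop :=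
  ∀ ℓ ∈ L, ∀ x ∈ P, ∀ y ∈ P, ℓ - (x - y) ∈ W → ℓ ∈ W

/-- The segment from `b • y` to `b • x` represents the circle `ℝ ℓ / ℤ ℓ` modulo `W`, so adding
`b • P` makes up for passing from `W ⊔ ℝ ℓ` to `W`. -/
lemma mem_smul_add_of_sup_span_singleton (hP : Convex ℝ P) {s b : ℝ} (hs : 0 ≤ s) (hb : 0 ≤ b)
    {ℓ x y : E} (hℓ : ℓ ∈ L) (hx : x ∈ P) (hy : y ∈ P) (hxy : ℓ - (b • x - b • y) ∈ W)
    (hcov : ∀ p, ∃ u ∈ s • P, ∃ m ∈ L, p - u - m ∈ W ⊔ Submodule.span ℝ {ℓ}) (p : E) :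
    ∃ u ∈ (s + b) • P, ∃ m ∈ L, p - u - m ∈ W := by
  obtain ⟨u, hu, m, hm, h⟩ := hcov (p - b • y)
  obtain ⟨w, hw, t, htw⟩ : ∃ w ∈ W, ∃ t : ℝ, w + t • ℓ = p - b • y - u - m := by
    obtain ⟨w, hw, _, hv, hwv⟩ := Submodule.mem_sup.1 h
    obtain ⟨t, rfl⟩ := Submodule.mem_span_singleton.1 hv
    exact ⟨w, hw, t, hwv⟩
  have hmem : Int.fract t • x + (1 - Int.fract t) • y ∈ P :=
    hP hx hy (Int.fract_nonneg t) (sub_nonneg.2 (Int.fract_lt_one t).le) (by ring)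
  refine ⟨u + b • (Int.fract t • x + (1 - Int.fract t) • y), ?_, m + ⌊t⌋ • ℓ,
    add_mem hm (L.smul_mem _ hℓ), ?_⟩
  · rw [hP.add_smul hs hb]
    exact Set.add_mem_add hu (Set.smul_mem_smul_set hmem)
  · have hdecomp : p - (u + b • (Int.fract t • x + (1 - Int.fract t) • y)) - (m + ⌊t⌋ • ℓ) =
        w + Int.fract t • (ℓ - (b • x - b • y)) := by
      rw [← Int.cast_smul_eq_zsmul ℝ]
      linear_combination (norm := module) (-1 : ℝ) • htw + (Int.floor_add_fract t).symm • ℓ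
    exact hdecomp ▸ add_mem hw (W.smul_mem _ hxy)

lemma sum_smul_add_smul_mem_interior (hK : Convex ℝ K) {ι : Type*} [Fintype ι] {w : ι → ℝ}
    {k : ι → E} {o : E} (hw : ∀ i, 0 ≤ w i) (hw1 : ∑ i, w i < 1) (hk : ∀ i, k i ∈ K)
    (ho : o ∈ interior K) : ∑ i, w i • k i + (1 - ∑ i, w i) • o ∈ interior K := by
  have hopen : IsOpen ((∑ i, w i • k i) +ᵥ (1 - ∑ i, w i) • interior K) :=
    (isOpen_interior.smul₀ (sub_pos.2 hw1).ne').vadd _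
  refine interior_maximal ?_ hopen (Set.vadd_mem_vadd_set (Set.smul_mem_smul_set ho))
  rintro _ ⟨_, ⟨y, hy, rfl⟩, rfl⟩
  have hsum := hK.sum_mem (t := .univ) (w := fun i : Option ι => i.elim (1 - ∑ i, w i) w)
    (z := fun i => i.elim y k) (by
      rintro (_ | i) _
      exacts [sub_nonneg.2 hw1.le, hw i]) (by simp [Fintype.sum_option]) (by
      rintro (_ | i) _
      exacts [interior_subset hy, hk i])
  simpa [Fintype.sum_option, add_comm] using hsum

theorem IsPacking.abs_det_sub_le (hK : Convex ℝ K) (hKne : (interior K).Nonempty) {b : ℝ}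
    (hb : 0 < b) (hpack : IsPacking L W (b • interior K)) {ι : Type*} [Fintype ι] [DecidableEq ι]
    {π : E →ₗ[ℝ] (ι → ℝ)} (hπ : IsQuotientCoord L W π) {v : ι → E} (hv : ∀ i, v i ∈ K) {p : E}
    (hp : p ∈ K) :
    |(Pi.basisFun ℝ ι).det fun i => π (v i) - π p| ≤
      (Fintype.card ι).factorial / b ^ Fintype.card ι := by
  obtain ⟨o, ho⟩ := hKne
  have hdet : |(Pi.basisFun ℝ ι).det fun i => b • (π (v i) - π p)| ≤
      (Fintype.card ι).factorial := by
    refine abs_det_le_factorial fun x hx hmem => ?_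
    obtain ⟨ℓ, hℓ, hℓx⟩ := hπ.exists_apply_eq hmem
    -- `∑ xᵢ (vᵢ - p)` is the difference of two points of the interior of `K`: split each term
    -- according to the sign of `xᵢ`, and fill up both points with the missing multiple of `o`.
    let y := ∑ i, |x i| • (if 0 ≤ x i then v i else p) + (1 - ∑ i, |x i|) • o
    let z := ∑ i, |x i| • (if 0 ≤ x i then p else v i) + (1 - ∑ i, |x i|) • o
    have hy : y ∈ interior K := sum_smul_add_smul_mem_interior hK (fun i => abs_nonneg _) hx
      (fun i => by split_ifs; exacts [hv i, hp]) ho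
    have hz : z ∈ interior K := sum_smul_add_smul_mem_interior hK (fun i => abs_nonneg _) hx
      (fun i => by split_ifs; exacts [hp, hv i]) ho
    have hyz : b • y - b • z = ∑ i, x i • b • (v i - p) := by
      simp only [y, z, ← smul_sub, add_sub_add_right_eq_sub, ← Finset.sum_sub_distrib,
        Finset.smul_sum]
      refine Finset.sum_congr rfl fun i _ => ?_
      split_ifs with h
      · rw [abs_of_nonneg h, smul_comm]
      · rw [abs_of_neg (not_le.1 h), smul_comm]
        module
    rw [← hℓx, hπ.apply_eq_zero]
    refine hpack ℓ hℓ _ (Set.smul_mem_smul_set hy) _ (Set.smul_mem_smul_set hz) ?_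
    rw [← hπ.apply_eq_zero, map_sub, hyz, hℓx]
    simp
  have hsmul := (Pi.basisFun ℝ ι).det.map_smul_univ (fun _ => b) fun i => π (v i) - π p
  rw [hsmul, Finset.prod_const, Finset.card_univ, smul_eq_mul, abs_mul,
    abs_of_pos (by positivity)] at hdet
  rwa [le_div_iff₀' (by positivity)]

variable [FiniteDimensional ℝ E]

theorem exists_isPacking_or_forall_mem_smul_add (hP : Convex ℝ P) (hPne : P.Nonempty) {b : ℕ → ℝ}
    (hb : ∀ i, 0 ≤ b (i + 1)) {j : ℕ} (hW : IsRational L W) (hj : finrank ℝ W + j = finrank ℝ E) :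
    (∃ W', IsRational L W' ∧ ∃ i, 1 ≤ i ∧ finrank ℝ W' + i = finrank ℝ E ∧
      IsPacking L W' (b i • P)) ∨
    ∀ p, ∃ u ∈ (∑ i ∈ Finset.range j, b (i + 1)) • P, ∃ m ∈ L, p - u - m ∈ W := by
  induction j generalizing W with
  | zero =>
    have hWtop : W = ⊤ := Submodule.eq_top_of_finrank_eq hj
    obtain ⟨x, hx⟩ := hPne
    exact .inr fun p => ⟨_, Set.smul_mem_smul_set hx, 0, zero_mem _, hWtop ▸ trivial⟩
  | succ j ih =>
    by_cases hpack : IsPacking L W (b (j + 1) • P)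
    · exact .inl ⟨W, hW, j + 1, by omega, hj, hpack⟩
    simp only [IsPacking, Set.mem_smul_set, forall_exists_index, and_imp, forall_apply_eq_imp_iff₂,
      not_forall, exists_prop] at hpack
    obtain ⟨ℓ, hℓ, x, hx, y, hy, hxy, hℓW⟩ := hpack
    have hrank := Submodule.finrank_sup_span_singleton (K := ℝ) hℓW
    refine (ih (hW.sup_span_singleton hℓ) (by omega)).imp_right fun hcov => ?_
    rw [Finset.sum_range_succ]
    exact mem_smul_add_of_sup_span_singleton hP (Finset.sum_nonneg fun i _ => hb _) (hb _)
      hℓ hx hy hxy hcov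

theorem exists_isPacking (hK : Convex ℝ K) (hKne : (interior K).Nonempty) {a : ℝ} (ha : 0 < a)
    (hn : 0 < finrank ℝ E) (hKL : Disjoint (L : Set E) (interior (a • K))) :
    ∃ W, IsRational L W ∧ ∃ j, 1 ≤ j ∧ finrank ℝ W + j = finrank ℝ E ∧
      IsPacking L W (((2 * j - 1) * (a / finrank ℝ E ^ 2)) • interior K) := by
  have hbot : IsRational L (⊥ : Submodule ℝ E) := by
    simpa using isRational_span (Set.empty_subset _)
  have hsum : ∑ i ∈ Finset.range (finrank ℝ E), (2 * ((i + 1 : ℕ) : ℝ) - 1) * (a / finrank ℝ E ^ 2)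
      = a := by
    have hodd (n : ℕ) : ∑ i ∈ Finset.range n, (2 * ((i + 1 : ℕ) : ℝ) - 1) = n ^ 2 := by
      induction n with
      | zero => simp
      | succ n ih => rw [Finset.sum_range_succ, ih]; push_cast; ring
    rw [← Finset.sum_mul, hodd]
    field_simp
  have hnonneg (i : ℕ) : 0 ≤ (2 * ((i + 1 : ℕ) : ℝ) - 1) * (a / finrank ℝ E ^ 2) := by
    push_cast
    exact mul_nonneg (by linarith [(Nat.cast_nonneg i : (0 : ℝ) ≤ i)]) (by positivity)
  refine (exists_isPacking_or_forall_mem_smul_add (j := finrank ℝ E)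
    (b := fun j => (2 * j - 1) * (a / finrank ℝ E ^ 2)) hK.interior hKne hnonneg hbot
    (by simp)).resolve_right fun hcov => ?_
  obtain ⟨u, hu, m, hm, h⟩ := hcov 0
  rw [hsum, ← interior_smul₀ ha.ne'] at hu
  obtain rfl : m = -u := by
    rw [Submodule.mem_bot] at h
    linear_combination (norm := module) -h
  exact hKL.le_bot ⟨neg_mem_iff.1 hm, hu⟩

end Packing

/-! ### Simplices of lattice points -/

section Determinant

open Module

variable {V : Type*} [AddCommGroup V] [Module ℝ V] {ι : Type*} [Fintype ι] [DecidableEq ι]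

lemma det_sub_const (b e : Basis ι ℝ V) (x : V) :
    (b.det fun i => e i - x) = b.det e * (1 - ∑ i, e.repr x i) := by
  have hmat : e.toMatrix (fun i => e i - x) =
      1 + Matrix.replicateCol Unit (-e.repr x) * Matrix.replicateRow Unit (1 : ι → ℝ) := by
    ext i j
    simp [Basis.toMatrix_apply, Matrix.mul_apply, Matrix.one_apply, Finsupp.single_apply, eq_comm,
      sub_eq_add_neg]
  rw [Basis.det_apply, ← b.toMatrix_mul_toMatrix e, Matrix.det_mul, ← Basis.det_apply, hmat,
    Matrix.det_one_add_replicateCol_mul_replicateRow]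
  simp [dotProduct, sub_eq_add_neg]

lemma det_mul_repr (b e : Basis ι ℝ V) (x : V) (i : ι) :
    b.det e * e.repr x i = b.det (Function.update e i x) := by
  have h := b.det_smul_mk_coord_eq_det_update e.linearIndependent e.span_eq.ge i
  have he : Basis.mk e.linearIndependent e.span_eq.ge = e := by ext; simp
  rw [he] at h
  exact LinearMap.congr_fun h x

lemma exists_abs_det_mul_repr_eq_intCast (e : Basis ι ℝ (ι → ℝ)) (he : ∀ i, e i ∈ stdLattice ι)
    {x : ι → ℝ} (hx : x ∈ stdLattice ι) (i : ι) :
    ∃ m : ℤ, |(Pi.basisFun ℝ ι).det e| * e.repr x i = m := by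
  obtain ⟨m, hm⟩ := exists_det_eq_intCast (v := Function.update e i x) fun j => by
    obtain rfl | hj := eq_or_ne j i
    · simpa using hx
    · simpa [hj] using he j
  rw [← det_mul_repr] at hm
  rcases abs_choice ((Pi.basisFun ℝ ι).det e) with h | h
  · exact ⟨m, by rw [h, hm]⟩
  · exact ⟨-m, by rw [h, neg_mul, hm, Int.cast_neg]⟩

lemma abs_det_basis_pos (b e : Basis ι ℝ V) : 0 < |b.det e| :=
  abs_pos.2 (b.isUnit_det e).ne_zero

end Determinant

section Simplex

open Module

variable {E : Type*} [NormedAddCommGroup E] [NormedSpace ℝ E] {L : Submodule ℤ E}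
  {W : Submodule ℝ E} {K : Set E} {ι : Type*}

lemma smul_subset_smul_of_le (hK : Convex ℝ K) (hK0 : 0 ∈ K) {s t : ℝ} (hs : 0 ≤ s) (hst : s ≤ t) :
    s • K ⊆ t • K := by
  rw [← add_sub_cancel s t, hK.add_smul hs (sub_nonneg.2 hst)]
  exact Set.subset_add_left _ (Set.zero_mem_smul_set hK0)

lemma sum_smul_mem_sum_smul (hK : Convex ℝ K) (hKne : K.Nonempty) {s : Finset ι} {w : ι → ℝ}
    {k : ι → E} (hw : ∀ i ∈ s, 0 ≤ w i) (hk : ∀ i ∈ s, k i ∈ K) :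
    ∑ i ∈ s, w i • k i ∈ (∑ i ∈ s, w i) • K := by
  classical
  induction s using Finset.induction with
  | empty => simp [Set.zero_smul_set hKne]
  | insert i s his ih =>
    simp only [Finset.forall_mem_insert] at hw hk
    rw [Finset.sum_insert his, Finset.sum_insert his, hK.add_smul hw.1 (Finset.sum_nonneg hw.2)]
    exact Set.add_mem_add (Set.smul_mem_smul_set hk.1) (ih hw.2 hk.2)

/-- The simplices with vertices in `K` have normalized volume at most `g` after projection
by `π`. -/
def SimplexVolumeLE [Fintype ι] [DecidableEq ι] (π : E →ₗ[ℝ] (ι → ℝ)) (K : Set E) (g : ℝ) : Prop :=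
  ∀ v : ι → E, (∀ i, v i ∈ K) → ∀ p ∈ K, |(Pi.basisFun ℝ ι).det fun i => π (v i) - π p| ≤ g

lemma IsQuotientCoord.sub_sum_repr_smul_mem [Fintype ι] {π : E →ₗ[ℝ] (ι → ℝ)}
    (hπ : IsQuotientCoord L W π) {v : ι → E} (e : Basis ι ℝ (ι → ℝ)) (he : ∀ i, e i = π (v i))
    (p : E) : p - ∑ i, e.repr (π p) i • v i ∈ W := by
  simp only [← hπ.apply_eq_zero, map_sub, map_sum, map_smul, ← he, e.sum_repr, sub_self]

lemma SimplexVolumeLE.abs_det_smul_sub_sum_mem_smul [Fintype ι] [DecidableEq ι]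
    {π : E →ₗ[ℝ] (ι → ℝ)} {g : ℝ} (hg : SimplexVolumeLE π K g) (hK : Convex ℝ K) (hK0 : 0 ∈ K)
    {v : ι → E} (hv : ∀ i, v i ∈ K) {p : E} (hp : p ∈ K) (e : Basis ι ℝ (ι → ℝ))
    (he : ∀ i, e i = π (v i)) (hpe : ∀ i, e.repr (π p) i ≤ 0) :
    |(Pi.basisFun ℝ ι).det e| • (p - ∑ i, e.repr (π p) i • v i) ∈ g • K := by
  have hsum : 0 ≤ ∑ i, -e.repr (π p) i := Finset.sum_nonneg fun i _ => neg_nonneg.2 (hpe i)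
  have hdet := hg v hv p hp
  simp only [← he, det_sub_const, abs_mul] at hdet
  rw [sub_eq_add_neg, ← Finset.sum_neg_distrib, abs_of_nonneg (add_nonneg zero_le_one hsum)] at hdet
  refine smul_subset_smul_of_le hK hK0 (by positivity) hdet ?_
  rw [mul_smul, hK.add_smul zero_le_one hsum, one_smul, sub_eq_add_neg, ← Finset.sum_neg_distrib]
  simp only [← neg_smul]
  exact Set.smul_mem_smul_set (Set.add_mem_add hp (sum_smul_mem_sum_smul hK ⟨0, hK0⟩
    (fun i _ => neg_nonneg.2 (hpe i)) fun i _ => hv i))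

lemma IsQuotientCoord.abs_det_smul_sub_sum_mem [Fintype ι] [DecidableEq ι] {π : E →ₗ[ℝ] (ι → ℝ)}
    (hπ : IsQuotientCoord L W π) {v : ι → E} (hv : ∀ i, v i ∈ L) {p : E} (hp : p ∈ L)
    (e : Basis ι ℝ (ι → ℝ)) (he : ∀ i, e i = π (v i)) :
    |(Pi.basisFun ℝ ι).det e| • (p - ∑ i, e.repr (π p) i • v i) ∈ L := by
  have heL (i : ι) : e i ∈ stdLattice ι := he i ▸ hπ.apply_mem (hv i)
  obtain ⟨m, hm⟩ := exists_det_eq_intCast heL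
  choose c hc using exists_abs_det_mul_repr_eq_intCast e heL (hπ.apply_mem hp)
  simp only [smul_sub, Finset.smul_sum, smul_smul, hc]
  rw [hm, ← Int.cast_abs]
  simp only [Int.cast_smul_eq_zsmul]
  exact sub_mem (L.smul_mem _ hp) (sum_mem fun i _ => L.smul_mem _ (hv i))

end Simplex

/-! ### Lattice-generated convex bodies -/

section Facet

open Module PointedCone

variable {E : Type*} [NormedAddCommGroup E] [NormedSpace ℝ E] {L : Submodule ℤ E} {K : Set E}

/-- A convex body containing the origin whose cone is generated by the lattice points it
contains. -/
structure IsLatticeGenerated (L : Submodule ℤ E) (K : Set E) : Prop where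
  convex : Convex ℝ K
  isCompact : IsCompact K
  zero_mem : 0 ∈ K
  nonempty_interior : (interior K).Nonempty
  subset_hull : K ⊆ hull ℝ (L ∩ K : Set E)

/-- Some nonzero element of the dual lattice of `L` takes values in `[0, c]` on `K`. -/
def HasDualVector (L : Submodule ℤ E) (K : Set E) (c : ℝ) : Prop :=
  ∃ φ : E →ₗ[ℝ] ℝ, φ ≠ 0 ∧ (∀ x ∈ L, ∃ m : ℤ, φ x = m) ∧ ∀ x ∈ K, φ x ∈ Set.Icc 0 c

lemma HasDualVector.mono {c d : ℝ} (h : HasDualVector L K c) (hcd : c ≤ d) :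
    HasDualVector L K d :=
  let ⟨φ, hφ, hφL, hφK⟩ := h
  ⟨φ, hφ, hφL, fun x hx => Set.Icc_subset_Icc_right hcd (hφK x hx)⟩

lemma IsLatticeGenerated.finite_inter [FiniteDimensional ℝ E] [DiscreteTopology L]
    (hK : IsLatticeGenerated L K) : (L ∩ K : Set E).Finite := by
  have : DiscreteTopology L.toAddSubgroup := ‹DiscreteTopology L›
  rw [Set.inter_comm]
  exact Metric.finite_isBounded_inter_isClosed DiscreteTopology.isDiscrete hK.isCompact.isBounded
    (AddSubgroup.isClosed_of_discrete (H := L.toAddSubgroup))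

lemma IsLatticeGenerated.span_inter_eq_top (hK : IsLatticeGenerated L K) :
    Submodule.span ℝ (L ∩ K : Set E) = ⊤ := by
  have hle : K ⊆ Submodule.span ℝ (L ∩ K : Set E) :=
    hK.subset_hull.trans (Submodule.span_subset_span _ ℝ _)
  exact Submodule.eq_top_of_nonempty_interior' _ (hK.nonempty_interior.mono (interior_mono hle))

lemma IsLatticeGenerated.apply_nonneg (hK : IsLatticeGenerated L K) {f : E →ₗ[ℝ] ℝ}
    (hf : ∀ v ∈ (L ∩ K : Set E), 0 ≤ f v) {x : E} (hx : x ∈ K) : 0 ≤ f x :=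
  nonneg_of_mem_hull hf (hK.subset_hull hx)

variable {ι : Type*} [Fintype ι] {W : Submodule ℝ E} {π : E →ₗ[ℝ] (ι → ℝ)}

lemma IsLatticeGenerated.span_image_eq_top (hK : IsLatticeGenerated L K)
    (hπ : IsQuotientCoord L W π) : Submodule.span ℝ (π '' (L ∩ K)) = ⊤ := by
  rw [← Submodule.map_span, hK.span_inter_eq_top, Submodule.map_top, hπ.range_eq]

variable [DecidableEq ι] {g : ℝ}

theorem IsLatticeGenerated.hasDualVector_of_hull_ne_top [FiniteDimensional ℝ E] [DiscreteTopology L]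
    (hK : IsLatticeGenerated L K) (hπ : IsQuotientCoord L W π) (hg : SimplexVolumeLE π K g)
    (hne : hull ℝ (π '' (L ∩ K)) ≠ ⊤) : HasDualVector L K g := by
  obtain ⟨e, he, i, hi⟩ := exists_basis_repr_nonneg (finrank_fintype_fun_eq_card ℝ).symm
    (hK.finite_inter.image π) (hK.span_image_eq_top hπ) hne
  choose v hv hve using he
  let D := |(Pi.basisFun ℝ ι).det e|
  refine ⟨D • e.coord i ∘ₗ π, fun h => ?_, fun x hx => ?_, fun x hx => ⟨?_, ?_⟩⟩
  · have hD : D = 0 := by simpa [hve] using LinearMap.congr_fun h (v i)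
    exact (abs_det_basis_pos _ e).ne' hD
  · exact exists_abs_det_mul_repr_eq_intCast e (fun j => hve j ▸ hπ.apply_mem (hv j).1)
      (hπ.apply_mem hx) i
  · exact mul_nonneg (abs_nonneg _) <| hK.apply_nonneg (f := e.coord i ∘ₗ π)
      (fun t ht => hi _ (Set.mem_image_of_mem π ht)) hx
  · calc D * e.repr (π x) i ≤ |(Pi.basisFun ℝ ι).det e * e.repr (π x) i| := by
          rw [abs_mul]
          gcongr
          exact le_abs_self _
      _ = |(Pi.basisFun ℝ ι).det fun j => π (Function.update v i x j) - π 0| := by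
          rw [det_mul_repr]
          congr 2
          funext j
          obtain rfl | hj := eq_or_ne j i <;> simp [*]
      _ ≤ g := hg _ (fun j => by
          obtain rfl | hj := eq_or_ne j i <;> simp [*, (hv _).2]) 0 hK.zero_mem

end Facet

/-! ### Slices of lattice-generated bodies -/

section Interior

variable {E F : Type*} [NormedAddCommGroup E] [NormedSpace ℝ E] [NormedAddCommGroup F]
  [NormedSpace ℝ F] {A : Set E}

lemma exists_mem_openSegment_of_mem_interior {x : E} (hx : x ∈ interior A) (o : E) :
    ∃ y ∈ A, x ∈ openSegment ℝ o y := by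
  obtain ⟨δ, hδA, hδ⟩ :=
    (((eventually_homothety_mem_of_mem_interior ℝ o hx).filter_mono nhdsWithin_le_nhds).and
      (self_mem_nhdsWithin (s := Set.Ioi (1 : ℝ)))).exists
  have hδ : 1 < δ := hδ
  refine ⟨_, hδA, 1 - δ⁻¹, δ⁻¹, sub_pos.2 (inv_lt_one_of_one_lt₀ hδ), by positivity, by ring, ?_⟩
  simp only [AffineMap.homothety_apply, vsub_eq_sub, vadd_eq_add, smul_add, smul_smul,
    inv_mul_cancel₀ (zero_lt_one.trans hδ).ne']
  module

lemma interior_preimage_subset_of_mem (hA : Convex ℝ A) (f : F →ₗ[ℝ] E) {o : F}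
    (ho : f o ∈ interior A) : interior (f ⁻¹' A) ⊆ f ⁻¹' interior A := by
  intro x hx
  obtain ⟨y, hy, hxy⟩ := exists_mem_openSegment_of_mem_interior hx o
  exact hA.openSegment_interior_self_subset_interior ho hy <|
    (image_openSegment ℝ f.toAffineMap o y).le (Set.mem_image_of_mem f hxy)

lemma interior_image_subset (hA : Convex ℝ A) (hne : (interior A).Nonempty) (f : E →ₗ[ℝ] F) :
    interior (f '' A) ⊆ f '' interior A := by
  intro x hx
  obtain ⟨o, ho⟩ := hne
  obtain ⟨_, ⟨y, hy, rfl⟩, hxy⟩ := exists_mem_openSegment_of_mem_interior hx (f o)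
  exact Set.image_mono (hA.openSegment_interior_self_subset_interior ho hy)
    ((image_openSegment ℝ f.toAffineMap o y).ge hxy)

end Interior

section Slice

open Module PointedCone

variable {E : Type*} [NormedAddCommGroup E] [NormedSpace ℝ E] {L : Submodule ℤ E} {K : Set E}
  {ι : Type*} [Fintype ι] {W : Submodule ℝ E} {π : E →ₗ[ℝ] (ι → ℝ)} {g : ℝ}

lemma exists_basis_apply_of_mem_hull {ι : Type*} [Finite ι] {π : E →ₗ[ℝ] (ι → ℝ)} {A B : Set E}
    (hAB : A ⊆ B) (hB : Submodule.span ℝ (π '' B) = ⊤) {x : ι → ℝ} (hx : x ∈ hull ℝ (π '' A)) :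
    ∃ (v : ι → E) (e : Basis ι ℝ (ι → ℝ)), (∀ i, e i = π (v i)) ∧ (∀ i, v i ∈ B) ∧
      ∀ i, 0 ≤ e.repr x i ∧ (e.repr x i ≠ 0 → v i ∈ A) := by
  cases nonempty_fintype ι
  obtain ⟨e, heB, he⟩ := exists_basis_of_mem_hull (finrank_fintype_fun_eq_card ℝ).symm
    (Set.image_mono hAB) hB hx
  have hv (i : ι) : ∃ v, e i = π v ∧ v ∈ B ∧ (e.repr x i ≠ 0 → v ∈ A) := by
    by_cases hi : e.repr x i = 0
    · obtain ⟨v, hv, hvi⟩ := heB i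
      exact ⟨v, hvi.symm, hv, fun h => absurd hi h⟩
    · obtain ⟨v, hv, hvi⟩ := (he i).2 hi
      exact ⟨v, hvi.symm, hAB hv, fun _ => hv⟩
  choose v hve hvB hvA using hv
  exact ⟨v, e, hve, hvB, fun i => ⟨(he i).1, hvA i⟩⟩

lemma exists_sub_mem_of_hull_image_eq_top (hπ : IsQuotientCoord L W π) {T : Set E}
    (htop : hull ℝ (π '' T) = ⊤) (x : E) : ∃ s ∈ hull ℝ T, s - x ∈ W := by
  obtain ⟨s, hs, hsx⟩ : π x ∈ (hull ℝ T).map π := by rw [map_hull, htop]; trivial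
  exact ⟨s, hs, by rw [← hπ.apply_eq_zero, map_sub, sub_eq_zero]; exact hsx⟩

lemma IsLatticeGenerated.exists_mem_interior (hK : IsLatticeGenerated L K)
    (hW : ∀ x, ∃ s ∈ hull ℝ (L ∩ K : Set E), s - x ∈ W) : ∃ o ∈ W, o ∈ interior K := by
  obtain ⟨y, hy⟩ := hK.nonempty_interior
  obtain ⟨s, hs, hsy⟩ := hW (-y)
  obtain ⟨t, ht, k, hk, rfl⟩ := exists_smul_of_mem_hull hK.convex hK.zero_mem
    (Submodule.span_mono Set.inter_subset_right hs)
  refine ⟨(1 / (1 + t)) • y + (t / (1 + t)) • k, ?_,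
    hK.convex.combo_interior_self_mem_interior hy hk (by positivity) (by positivity)
      (by field_simp)⟩
  have : (1 / (1 + t)) • y + (t / (1 + t)) • k = (1 / (1 + t)) • (t • k - -y) := by module
  exact this ▸ W.smul_mem _ hsy

variable [DecidableEq ι]

lemma SimplexVolumeLE.exists_smul_add_mem (hg : SimplexVolumeLE π K g) (hK : Convex ℝ K)
    (hK0 : 0 ∈ K) (hπ : IsQuotientCoord L W π) (hspan : Submodule.span ℝ (π '' (L ∩ K)) = ⊤)
    {A : Set E} (hA : A ⊆ L ∩ K) {p : E} (hp : p ∈ (L ∩ K : Set E))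
    (hpA : -π p ∈ hull ℝ (π '' A)) :
    ∃ D : ℝ, 0 < D ∧ ∃ q ∈ hull ℝ A, D • p + q ∈ (L ∩ (W ∩ g • K) : Set E) := by
  obtain ⟨v, e, he, hv, hrepr⟩ := exists_basis_apply_of_mem_hull hA hspan hpA
  simp only [map_neg, Finsupp.neg_apply, neg_nonneg, neg_ne_zero] at hrepr
  set D := |(Pi.basisFun ℝ ι).det e|
  have hz : D • p + ∑ i, (D * -e.repr (π p) i) • v i = D • (p - ∑ i, e.repr (π p) i • v i) := by
    simp only [mul_neg, neg_smul, mul_smul, Finset.sum_neg_distrib, ← Finset.smul_sum, smul_sub,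
      ← sub_eq_add_neg]
  refine ⟨D, abs_det_basis_pos _ e, ∑ i, (D * -e.repr (π p) i) • v i, sum_mem fun i _ => ?_,
    hz ▸ ⟨hπ.abs_det_smul_sub_sum_mem (fun i => (hv i).1) hp.1 e he,
      W.smul_mem _ (hπ.sub_sum_repr_smul_mem e he p),
      hg.abs_det_smul_sub_sum_mem_smul hK hK0 (fun i => (hv i).2) hp.2 e he fun i => (hrepr i).1⟩⟩
  by_cases hi : e.repr (π p) i = 0
  · simp [hi]
  · exact PointedCone.smul_mem _ (mul_nonneg (abs_nonneg _) (neg_nonneg.2 (hrepr i).1))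
      (subset_hull ((hrepr i).2 hi))

/-- A nonnegative combination of lattice points of `K` that lies in `W` is peeled off by
successively subtracting multiples of lattice points of `W ∩ g • K`, until no term is left. -/
theorem SimplexVolumeLE.mem_hull_of_mem_hull (hg : SimplexVolumeLE π K g) (hK : Convex ℝ K)
    (hK0 : 0 ∈ K) (hπ : IsQuotientCoord L W π) (hspan : Submodule.span ℝ (π '' (L ∩ K)) = ⊤)
    {x : E} (hxW : x ∈ W) (hx : x ∈ hull ℝ (L ∩ K : Set E)) :
    x ∈ hull ℝ (L ∩ (W ∩ g • K) : Set E) := by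
  classical
  obtain ⟨t, ht, hxt⟩ := Submodule.mem_span_finite_of_mem_span hx
  clear hx
  induction t using Finset.strongInduction generalizing x with
  | H t ih =>
    have ih' {y p : E} (hp : p ∈ t) (hyW : y ∈ W) (hy : y ∈ hull ℝ (t.erase p : Set E)) :
        y ∈ hull ℝ (L ∩ (W ∩ g • K) : Set E) :=
      ih _ (Finset.erase_ssubset hp) hyW ((Finset.coe_subset.2 (t.erase_subset p)).trans ht) hy
    obtain rfl | ⟨p, hp⟩ := t.eq_empty_or_nonempty
    · simp_all
    obtain ⟨c, hc, rfl⟩ := mem_hull_finset.1 hxt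
    obtain hcp | hcp := (hc p hp).eq_or_lt
    · refine ih' hp hxW (mem_hull_finset.2
        ⟨c, fun v hv => hc v (Finset.mem_of_mem_erase hv), Finset.sum_erase _ ?_⟩)
      rw [← hcp, zero_smul]
    have hpt := neg_mem_hull_image hc (hπ.apply_eq_zero.2 hxW) hp hcp
    obtain ⟨D, hD, q, hq, hz⟩ := hg.exists_smul_add_mem hK hK0 hπ hspan ht (ht hp) hpt
    obtain ⟨d, hd, rfl⟩ := mem_hull_finset.1 hq
    let δ : E → ℝ := fun v => d v + if v = p then D else 0
    have hδ : ∑ v ∈ t, δ v • v = D • p + ∑ v ∈ t, d v • v := by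
      simp [δ, add_smul, Finset.sum_add_distrib, ite_smul, hp, add_comm]
    rw [← hδ] at hz
    obtain ⟨μ, hμ, u, hu, hmem⟩ := exists_sub_smul_mem_hull_erase hc
      ⟨p, hp, show 0 < δ p by simpa [δ] using add_pos_of_nonneg_of_pos (hd p hp) hD⟩
    rw [← sub_add_cancel (∑ v ∈ t, c v • v) (μ • ∑ v ∈ t, δ v • v)]
    exact add_mem (ih' hu (sub_mem hxW (W.smul_mem μ hz.2.1)) hmem)
      (PointedCone.smul_mem _ hμ (subset_hull hz))

lemma SimplexVolumeLE.mem_hull_comap_of_mem_hull (hg : SimplexVolumeLE π K g) (hK : Convex ℝ K)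
    (hK0 : 0 ∈ K) (hπ : IsQuotientCoord L W π) (hspan : Submodule.span ℝ (π '' (L ∩ K)) = ⊤)
    {x : W} (hx : (x : E) ∈ hull ℝ (L ∩ K : Set E)) :
    x ∈ hull ℝ (ZLattice.comap ℝ L W.subtype ∩ W.subtype ⁻¹' (g • K) : Set W) := by
  have himg : (L ∩ (W ∩ g • K) : Set E) = W.subtype ''
      (ZLattice.comap ℝ L W.subtype ∩ W.subtype ⁻¹' (g • K) : Set W) := by
    rw [ZLattice.coe_comap, ← Set.preimage_inter]
    exact (Set.inter_left_comm _ _ _).trans (Subtype.image_preimage_coe (W : Set E) _).symm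
  replace hx := hg.mem_hull_of_mem_hull hK hK0 hπ hspan x.2 hx
  rw [himg, ← map_hull] at hx
  obtain ⟨y, hy, hyx⟩ := hx
  exact Subtype.ext hyx ▸ hy

theorem IsLatticeGenerated.slice [FiniteDimensional ℝ E] (hK : IsLatticeGenerated L K)
    (hπ : IsQuotientCoord L W π) (hg : SimplexVolumeLE π K g) (hg0 : 0 < g)
    (hW : ∀ x, ∃ s ∈ hull ℝ (L ∩ K : Set E), s - x ∈ W) :
    IsLatticeGenerated (ZLattice.comap ℝ L W.subtype) (W.subtype ⁻¹' (g • K)) where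
  convex := (hK.convex.smul g).linear_preimage _
  isCompact := W.closed_of_finiteDimensional.isClosedEmbedding_subtypeVal.isCompact_preimage
    (hK.isCompact.smul g)
  zero_mem := ⟨0, hK.zero_mem, smul_zero g⟩
  nonempty_interior := by
    obtain ⟨o, hoW, ho⟩ := hK.exists_mem_interior hW
    refine ⟨⟨g • o, W.smul_mem g hoW⟩, preimage_interior_subset_interior_preimage
      continuous_subtype_val ?_⟩
    rw [interior_smul₀ hg0.ne']
    exact Set.smul_mem_smul_set ho
  subset_hull x := by
    rintro ⟨k, hk, hkx⟩
    refine hg.mem_hull_comap_of_mem_hull hK.convex hK.zero_mem hπ (hK.span_image_eq_top hπ) ?_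
    rw [← W.subtype_apply x, ← hkx]
    exact PointedCone.smul_mem _ hg0.le (hK.subset_hull hk)

lemma IsLatticeGenerated.disjoint_interior_slice (hK : IsLatticeGenerated L K)
    (hW : ∀ x, ∃ s ∈ hull ℝ (L ∩ K : Set E), s - x ∈ W) (hg0 : 0 < g) {a : ℝ} (ha : 0 < a)
    (hL : Disjoint (L : Set E) (interior (a • K))) :
    Disjoint (ZLattice.comap ℝ L W.subtype : Set W)
      (interior ((a / g) • W.subtype ⁻¹' (g • K))) := by
  have hpre : (a / g) • W.subtype ⁻¹' (g • K) = W.subtype ⁻¹' (a • K) := by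
    ext x
    rw [Set.mem_smul_set_iff_inv_smul_mem₀ (by positivity), Set.mem_preimage, map_smul,
      ← Set.mem_smul_set_iff_inv_smul_mem₀ (by positivity), smul_smul, div_mul_cancel₀ _ hg0.ne',
      Set.mem_preimage]
  obtain ⟨o, hoW, ho⟩ := hK.exists_mem_interior hW
  have hsub := interior_preimage_subset_of_mem (hK.convex.smul a) W.subtype
    (o := ⟨a • o, W.smul_mem a hoW⟩) (by
      rw [interior_smul₀ ha.ne']
      exact Set.smul_mem_smul_set ho)
  rw [hpre]
  exact (hL.preimage W.subtype).mono_right hsub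

/-- If `f q` is maximal among all basic extensions `f` of `ψ` and all `q ∈ K`, then `-π q` lies in
the cone over the projected zeros of `f`, so `f q` is controlled by a value of `ψ` on the slice. -/
theorem IsLatticeGenerated.hasDualVector_of_slice [FiniteDimensional ℝ E] [DiscreteTopology L]
    (hK : IsLatticeGenerated L K) (hπ : IsQuotientCoord L W π) (hg : SimplexVolumeLE π K g)
    (hW : ∀ x, ∃ s ∈ hull ℝ (L ∩ K : Set E), s - x ∈ W) {c : ℝ}
    (hslice : HasDualVector (ZLattice.comap ℝ L W.subtype) (W.subtype ⁻¹' (g • K)) c) :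
    HasDualVector L K c := by
  obtain ⟨ψ, hψ0, hψL, hψK⟩ := hslice
  have hψ (w : W) (hw : (w : E) ∈ hull ℝ (L ∩ K : Set E)) : 0 ≤ ψ w :=
    nonneg_of_mem_hull (fun v hv => (hψK v hv.2).1)
      (hg.mem_hull_comap_of_mem_hull hK.convex hK.zero_mem hπ (hK.span_image_eq_top hπ) hw)
  obtain ⟨f, ⟨hfT, hfψ, hf⟩, q, hqK, hqmax, s, hs, hsq⟩ := exists_basicExtension_le_apply
    hK.finite_inter hW hψ hK.isCompact ⟨0, hK.zero_mem⟩
  have hZ : Submodule.span ℝ (π '' {v ∈ (L ∩ K : Set E) | f v = 0}) = ⊤ := by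
    rw [← Submodule.map_span, ← hπ.range_eq, LinearMap.range_eq_map, ← hf, Submodule.map_sup,
      LinearMap.le_ker_iff_map.1 hπ.ker_eq.ge, bot_sup_eq]
  have hqZ : -π q ∈ hull ℝ (π '' {v ∈ (L ∩ K : Set E) | f v = 0}) := by
    rw [← map_hull]
    exact ⟨s, hs, by simpa [← hπ.apply_eq_zero, add_eq_zero_iff_eq_neg] using hsq⟩
  obtain ⟨v, e, he, hv, hrepr⟩ := exists_basis_apply_of_mem_hull subset_rfl hZ hqZ
  simp only [map_neg, Finsupp.neg_apply, neg_nonneg] at hrepr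
  set D := |(Pi.basisFun ℝ ι).det e|
  have hD : 0 < D := abs_det_basis_pos _ e
  have hfD (x : E) : D * f x = f (D • (x - ∑ i, e.repr (π x) i • v i)) := by
    simp [(hv _).2]
  refine ⟨D • f, fun h => ?_, fun x hx => ?_, fun x hx => ⟨?_, ?_⟩⟩
  · refine hψ0 (LinearMap.ext fun w => ?_)
    have := LinearMap.congr_fun ((smul_eq_zero_iff_right hD.ne').1 h) w
    rwa [hfψ] at this
  · obtain ⟨m, hm⟩ := hψL ⟨_, W.smul_mem D (hπ.sub_sum_repr_smul_mem e he x)⟩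
      (hπ.abs_det_smul_sub_sum_mem (fun i => (hv i).1.1) hx e he)
    exact ⟨m, (hfD x).trans ((hfψ ⟨_, _⟩).trans hm)⟩
  · exact mul_nonneg hD.le (hK.apply_nonneg hfT hx)
  · calc D * f x ≤ D * f q := by gcongr; exact hqmax x hx
      _ = ψ ⟨_, W.smul_mem D (hπ.sub_sum_repr_smul_mem e he q)⟩ := (hfD q).trans (hfψ ⟨_, _⟩)
      _ ≤ c := (hψK _ (hg.abs_det_smul_sub_sum_mem_smul hK.convex hK.zero_mem
          (fun i => (hv i).1.2) hqK e he fun i => (hrepr i).1)).2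

end Slice

/-! ### Large dilations -/

section Support

open Module

variable {E : Type*} [NormedAddCommGroup E] [NormedSpace ℝ E] {L : Submodule ℤ E} {K : Set E}
  {a : ℝ}

lemma exists_ne_zero_forall_mul_le (hK : Convex ℝ K) (hKne : (interior K).Nonempty) (ha : 0 < a)
    {y : E} (hy : y ∉ interior (a • K)) :
    ∃ α : E →ₗ[ℝ] ℝ, α ≠ 0 ∧ ∀ x ∈ K, a * α x ≤ α y := by
  obtain ⟨α, hα, h⟩ := geometric_hahn_banach_of_nonempty_interior_point (hK.smul a) hy
    (by rw [interior_smul₀ ha.ne']; exact hKne.smul_set)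
  refine ⟨α, fun h0 => hα (ContinuousLinearMap.coe_injective h0), fun x hx => ?_⟩
  simpa using h _ (Set.smul_mem_smul_set hx)

variable {ι : Type*}

lemma exists_ne_zero_nonpos_of_card_lt (hK : Convex ℝ K) (hKne : (interior K).Nonempty)
    (hK0 : 0 ∈ K) (ha : 0 < a) (hL : Disjoint (L : Set E) (interior (a • K))) {e : ι → E}
    (he : ∀ i, e i ∈ (L ∩ K : Set E)) {s : Finset ι} (hs : s.card < a) :
    ∃ α : E →ₗ[ℝ] ℝ, α ≠ 0 ∧ (∀ x ∈ K, α x ≤ 0) ∧ ∀ i ∈ s, α (e i) = 0 := by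
  obtain ⟨α, hα, h⟩ := exists_ne_zero_forall_mul_le hK hKne ha
    (Set.disjoint_left.1 hL (sum_mem fun i _ => (he i).1 : ∑ i ∈ s, e i ∈ L))
  have hsum : α (∑ i ∈ s, e i) = 0 := by
    have hle : a * α (∑ i ∈ s, e i) ≤ s.card * α (∑ i ∈ s, e i) := by
      rw [← nsmul_eq_mul]
      conv_lhs => rw [map_sum, Finset.mul_sum]
      exact Finset.sum_le_card_nsmul _ _ _ fun i _ => h _ (he i).2
    have hnn : 0 ≤ α (∑ i ∈ s, e i) := by simpa using h 0 hK0
    nlinarith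
  have hnonpos (x : E) (hx : x ∈ K) : α x ≤ 0 := by
    have := hsum ▸ h x hx
    exact nonpos_of_mul_nonpos_right this ha
  rw [map_sum] at hsum
  exact ⟨α, hα, hnonpos, (Finset.sum_eq_zero_iff_of_nonpos fun i _ => hnonpos _ (he i).2).1 hsum⟩

variable [Fintype ι]

lemma le_card_of_disjoint_interior_smul (hK : Convex ℝ K) (hKne : (interior K).Nonempty)
    (hK0 : 0 ∈ K) (ha : 0 < a) (hL : Disjoint (L : Set E) (interior (a • K))) {e : Basis ι ℝ E}
    (he : ∀ i, e i ∈ (L ∩ K : Set E)) : a ≤ Fintype.card ι := by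
  by_contra! h
  obtain ⟨α, hα, -, hαe⟩ := exists_ne_zero_nonpos_of_card_lt hK hKne hK0 ha hL he
    (s := Finset.univ) h
  exact hα (e.ext fun i => by simpa using hαe i)

lemma repr_nonneg_of_card_lt_add_one (hK : Convex ℝ K) (hKne : (interior K).Nonempty)
    (hK0 : 0 ∈ K) (ha : 0 < a) (hL : Disjoint (L : Set E) (interior (a • K))) {e : Basis ι ℝ E}
    (he : ∀ i, e i ∈ (L ∩ K : Set E)) (hcard : Fintype.card ι < a + 1) {x : E} (hx : x ∈ K)
    (l : ι) : 0 ≤ e.repr x l := by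
  classical
  obtain ⟨α, hα, hnonpos, hαe⟩ := exists_ne_zero_nonpos_of_card_lt hK hKne hK0 ha hL he
    (s := Finset.univ.erase l) (by
      have : 1 ≤ Fintype.card ι := Fintype.card_pos_iff.2 ⟨l⟩
      rw [Finset.card_erase_of_mem (Finset.mem_univ l), Finset.card_univ, Nat.cast_sub this]
      push_cast
      linarith)
  have hαel : α (e l) < 0 := (hnonpos _ (he l).2).lt_of_ne fun h0 =>
    hα (e.ext fun i => by by_cases hi : i = l <;> simp_all)
  have hαx : α x = e.repr x l * α (e l) := by
    conv_lhs => rw [← e.sum_repr x, map_sum]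
    refine (Finset.sum_eq_single l (fun i _ hi => ?_) (by simp)).trans (map_smul α _ _)
    rw [map_smul, hαe i (by simp [hi]), smul_zero]
  exact nonneg_of_mul_nonpos_left (hαx ▸ hnonpos x hx) hαel

lemma exists_repr_le_card_div (hK : Convex ℝ K) (hKne : (interior K).Nonempty)
    (hK0 : 0 ∈ K) (ha : 0 < a) (hL : Disjoint (L : Set E) (interior (a • K))) {e : Basis ι ℝ E}
    (he : ∀ i, e i ∈ (L ∩ K : Set E)) (hcard : Fintype.card ι < a + 1) :
    ∃ l, ∀ x ∈ K, e.repr x l ≤ Fintype.card ι / a := by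
  classical
  obtain ⟨α, hα, h⟩ := exists_ne_zero_forall_mul_le hK hKne ha
    (Set.disjoint_left.1 hL (sum_mem fun i _ => (he i).1 : ∑ i, e i ∈ L))
  simp only [map_sum] at h
  have hne : Nonempty ι := by
    by_contra! hι
    exact hα (e.ext fun i => hι.elim i)
  obtain ⟨l, -, hmax⟩ := Finset.univ.exists_max_image (fun i => α (e i)) Finset.univ_nonempty
  have hsum (i : ι) : ∑ j, α (e j) ≤ α (e i) + (Fintype.card ι - 1) * α (e l) := by
    rw [← Finset.add_sum_erase _ _ (Finset.mem_univ i)]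
    gcongr
    refine (Finset.sum_le_card_nsmul _ _ _ fun j _ => hmax j (Finset.mem_univ j)).trans_eq ?_
    rw [Finset.card_erase_of_mem (Finset.mem_univ i), Finset.card_univ, nsmul_eq_mul,
      Nat.cast_sub Fintype.card_pos, Nat.cast_one]
  have hl : 0 < α (e l) := by
    by_contra! hl
    have hnonpos (i : ι) : α (e i) ≤ 0 := (hmax i (Finset.mem_univ i)).trans hl
    have hzero := (Finset.sum_eq_zero_iff_of_nonpos fun i _ => hnonpos i).1
      ((Finset.sum_nonpos fun i _ => hnonpos i).antisymm (by simpa using h 0 hK0))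
    exact hα (e.ext fun i => by simpa using hzero i (Finset.mem_univ i))
  have hpos (i : ι) : 0 ≤ α (e i) := by
    have hal := (h _ (he l).2).trans (hsum i)
    nlinarith
  refine ⟨l, fun x hx => (le_div_iff₀' ha).2 (le_of_mul_le_mul_right ?_ hl)⟩
  calc a * e.repr x l * α (e l) = a * (e.repr x l * α (e l)) := mul_assoc _ _ _
    _ ≤ a * α x := by
      gcongr
      conv_rhs => rw [← e.sum_repr x, map_sum]
      simp only [map_smul, smul_eq_mul]
      exact Finset.single_le_sum (f := fun i => e.repr x i * α (e i)) (fun i _ => mul_nonneg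
        (repr_nonneg_of_card_lt_add_one hK hKne hK0 ha hL he hcard hx i) (hpos i))
        (Finset.mem_univ l)
    _ ≤ ∑ i, α (e i) := h x hx
    _ ≤ Fintype.card ι * α (e l) := by linarith [hsum l]

end Support

section Planar

open Module

variable {E : Type*} [NormedAddCommGroup E] [NormedSpace ℝ E] {L : Submodule ℤ E} {K : Set E}

lemma exists_basis_one_le_abs_repr [FiniteDimensional ℝ E] {ι : Type*} [Fintype ι]
    (hι : Fintype.card ι = finrank ℝ E) {T : Set E} (hT : T.Finite)
    (hspan : Submodule.span ℝ T = ⊤) :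
    ∃ e : Basis ι ℝ E, (∀ i, e i ∈ T) ∧ ∀ t ∈ T, ∀ i, e.repr t i ≠ 0 → 1 ≤ |e.repr t i| := by
  classical
  obtain ⟨b, hb, -⟩ := exists_basis_of_linearIndepOn hι (linearIndepOn_empty ℝ id)
    (Set.empty_subset T) hspan
  obtain ⟨v, ⟨hv, hv0⟩, hmin⟩ := Set.Finite.exists_minimalFor (fun v : ι → E => |b.det v|)
    {v | (∀ i, v i ∈ T) ∧ b.det v ≠ 0}
    ((Set.Finite.pi' fun _ : ι => hT).subset fun v hv => hv.1) ⟨b, hb, by simp [b.det_self]⟩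
  obtain ⟨hli, hsp⟩ := (b.is_basis_iff_det).2 hv0.isUnit
  let e := Basis.mk hli hsp.ge
  have he : ⇑e = v := Basis.coe_mk _ _
  refine ⟨e, fun i => he ▸ hv i, fun t ht i hti => ?_⟩
  have hupd : b.det v * e.repr t i = b.det (Function.update v i t) := he ▸ det_mul_repr b e t i
  have hle := hmin (j := Function.update v i t) ⟨fun j => by
    obtain rfl | hj := eq_or_ne j i <;> simp [*], hupd ▸ mul_ne_zero hv0 hti⟩
  by_contra! hlt
  have hdet : |b.det (Function.update v i t)| < |b.det v| := by
    rw [← hupd, abs_mul]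
    exact mul_lt_of_lt_one_right (abs_pos.2 hv0) hlt
  exact hdet.not_ge (hle hdet.le)

/-- If a point of the fundamental parallelogram of `e` is not in the triangle with vertices `0`,
`e 0`, `e 1`, then its mirror image is. -/
lemma exists_repr_eq_intCast_of_fin_two (hK : Convex ℝ K) (hK0 : 0 ∈ K) {e : Basis (Fin 2) ℝ E}
    (he : ∀ i, e i ∈ (L ∩ K : Set E))
    (hmin : ∀ t ∈ (L ∩ K : Set E), ∀ i, e.repr t i ≠ 0 → 1 ≤ |e.repr t i|) {x : E} (hx : x ∈ L)
    (i : Fin 2) : ∃ m : ℤ, e.repr x i = m := by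
  have hsmall {y : E} (hy : y ∈ L) (h0 : ∀ i, 0 ≤ e.repr y i) (hlt : ∀ i, e.repr y i < 1)
      (hsum : e.repr y 0 + e.repr y 1 ≤ 1) (i : Fin 2) : e.repr y i = 0 := by
    have hyK : y ∈ K := by
      have hmem := sum_smul_mem_sum_smul hK ⟨0, hK0⟩ (s := Finset.univ) (fun i _ => h0 i)
        fun i _ => (he i).2
      rw [e.sum_repr, Fin.sum_univ_two] at hmem
      simpa using smul_subset_smul_of_le hK hK0 (add_nonneg (h0 0) (h0 1)) hsum hmem
    by_contra hi
    have := hmin y ⟨hy, hyK⟩ i hi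
    rw [abs_of_nonneg (h0 i)] at this
    exact (hlt i).not_ge this
  let y := x - ∑ i, ⌊e.repr x i⌋ • e i
  have hy : y ∈ L := sub_mem hx (sum_mem fun i _ => L.smul_mem _ (he i).1)
  have hyrepr (i : Fin 2) : e.repr y i = Int.fract (e.repr x i) := by
    simp [y, Finsupp.single_apply, ← Int.cast_smul_eq_zsmul ℝ, -Int.self_sub_floor,
      ← Int.self_sub_floor, -Fin.sum_univ_two]
  have hy0 (i : Fin 2) : 0 ≤ e.repr y i := hyrepr i ▸ Int.fract_nonneg _
  have hy1 (i : Fin 2) : e.repr y i < 1 := hyrepr i ▸ Int.fract_lt_one _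
  suffices hfract : e.repr y i = 0 by
    obtain ⟨m, hm⟩ := Int.fract_eq_zero_iff.1 (hyrepr i ▸ hfract)
    exact ⟨m, hm.symm⟩
  rcases le_or_gt (e.repr y 0 + e.repr y 1) 1 with hsum | hsum
  · exact hsmall hy hy0 hy1 hsum i
  · let z := ∑ i, e i - y
    have hz : z ∈ L := sub_mem (sum_mem fun i _ => (he i).1) hy
    have hzrepr (i : Fin 2) : e.repr z i = 1 - e.repr y i := by
      simp [z, Finsupp.single_apply, -Fin.sum_univ_two]
    have hz0 := hsmall hz (fun i => by linarith [hzrepr i, hy1 i])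
      (Fin.forall_fin_two.2 ⟨by linarith [hzrepr 0, hy1 1], by linarith [hzrepr 1, hy1 0]⟩)
      (by linarith [hzrepr 0, hzrepr 1]) i
    linarith [hzrepr i, hy1 i]

theorem IsLatticeGenerated.hasDualVector_of_finrank_eq_two [FiniteDimensional ℝ E]
    [DiscreteTopology L] (hK : IsLatticeGenerated L K) (hE : finrank ℝ E = 2) {a : ℝ} (ha : 1 < a)
    (hL : Disjoint (L : Set E) (interior (a • K))) : HasDualVector L K (2 / a) := by
  obtain ⟨e, he, hmin⟩ := exists_basis_one_le_abs_repr (ι := Fin 2) (by simp [hE])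
    hK.finite_inter hK.span_inter_eq_top
  have hcard : (Fintype.card (Fin 2) : ℝ) < a + 1 := by
    rw [Fintype.card_fin, Nat.cast_ofNat]
    linarith
  have ha0 : 0 < a := one_pos.trans ha
  obtain ⟨l, hl⟩ := exists_repr_le_card_div hK.convex hK.nonempty_interior hK.zero_mem ha0 hL he
    hcard
  rw [Fintype.card_fin, Nat.cast_ofNat] at hl
  refine ⟨e.coord l, fun h => ?_, fun x hx =>
    exists_repr_eq_intCast_of_fin_two hK.convex hK.zero_mem he hmin hx l, fun x hx =>
    ⟨repr_nonneg_of_card_lt_add_one hK.convex hK.nonempty_interior hK.zero_mem ha0 hL he hcard hx l,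
      hl x hx⟩⟩
  simpa using LinearMap.congr_fun h (e l)

end Planar

/-! ### Induction on the dimension -/

section Induction

open Module PointedCone

variable {E : Type*} [NormedAddCommGroup E] [NormedSpace ℝ E] [FiniteDimensional ℝ E]
  {L : Submodule ℤ E} {K : Set E} {a : ℝ}

lemma IsLatticeGenerated.le_finrank (hK : IsLatticeGenerated L K) (ha : 0 < a)
    (hL : Disjoint (L : Set E) (interior (a • K))) : a ≤ finrank ℝ E := by
  obtain ⟨e, he, -⟩ := exists_basis_of_linearIndepOn (Fintype.card_fin _)
    (linearIndepOn_empty ℝ id) (Set.empty_subset _) hK.span_inter_eq_top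
  simpa using le_card_of_disjoint_interior_smul hK.convex hK.nonempty_interior hK.zero_mem ha hL he

lemma two_div_le_one_div_gammaFn_two (ha : 0 < a) (ha2 : a ≤ 2) : 2 / a ≤ 1 / gammaFn 2 a := by
  have hγ : gammaFn 2 a = a ^ 2 / 2 ^ 2 := by simp [gammaFn]
  rw [hγ, one_div_div, div_le_div_iff₀ ha (by positivity)]
  nlinarith

theorem IsLatticeGenerated.hasDualVector [DiscreteTopology L] [IsZLattice ℝ L]
    (hK : IsLatticeGenerated L K) (ha : 0 < a)
    (hL : Disjoint (L : Set E) (interior (a • K))) :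
    HasDualVector L K (1 / gammaFn (finrank ℝ E) a) := by
  induction hn : finrank ℝ E using Nat.strong_induction_on generalizing E a with
  | h n ih =>
  have han : a ≤ n := hn ▸ hK.le_finrank ha hL
  have hn0 : 0 < n := Nat.cast_pos.1 (ha.trans_le han)
  by_cases hplanar : n = 2 ∧ 1 < a
  · obtain ⟨rfl, ha1⟩ := hplanar
    exact (hK.hasDualVector_of_finrank_eq_two hn ha1 hL).mono
      (two_div_le_one_div_gammaFn_two ha (by exact_mod_cast han))
  obtain ⟨W, hWL, j, hj, hWj, hpack⟩ := exists_isPacking hK.convex hK.nonempty_interior ha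
    (hn ▸ hn0) hL
  rw [hn] at hWj hpack
  obtain ⟨π, hπ⟩ := hWL.exists_isQuotientCoord (ι := Fin j) (by rw [Fintype.card_fin, hn]; omega)
  have hg0 := detBound_pos hn0 hj ha
  have hb : 0 < (2 * j - 1) * (a / n ^ 2) :=
    mul_pos (by linarith [(Nat.one_le_cast (α := ℝ)).2 hj]) (by positivity)
  have hg : SimplexVolumeLE π K (detBound n a j) := fun v hv p hp => by
    simpa [detBound] using hpack.abs_det_sub_le hK.convex hK.nonempty_interior hb hπ hv hp
  by_cases htop : hull ℝ (π '' (L ∩ K)) = ⊤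
  · have hW := exists_sub_mem_of_hull_image_eq_top hπ htop
    have := isZLattice_comap_subtype hWL
    have hslice := hK.slice hπ hg hg0 hW
    have hdisj := hK.disjoint_interior_slice hW hg0 ha hL
    have hW0 : 0 < finrank ℝ W :=
      Nat.cast_pos.1 ((div_pos ha hg0).trans_le (hslice.le_finrank (div_pos ha hg0) hdisj))
    refine (hK.hasDualVector_of_slice hπ hg hW (ih _ (by omega) hslice (div_pos ha hg0) hdisj
      rfl)).mono ?_
    rw [show finrank ℝ W = n - j by omega]
    exact one_div_le_one_div_of_le (gammaFn_pos ha)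
      (gammaFn_le_gammaFn_div_detBound ha han hj (by omega))
  · refine (hK.hasDualVector_of_hull_ne_top hπ hg htop).mono ((le_div_iff₀' (gammaFn_pos ha)).2 ?_)
    exact gammaFn_mul_detBound_le_one ha han hj (by omega) fun h2 => by
      by_contra! h
      exact hplanar ⟨h2, h⟩

end Induction

/-! ### Reduction modulo the recession cone -/

section Recession

open Module PointedCone

variable {E : Type*} [NormedAddCommGroup E] [NormedSpace ℝ E]

lemma exists_add_mem_hull_of_mem_span {G : Set E} {x : E} (hx : x ∈ Submodule.span ℝ G) :
    ∃ z ∈ Submodule.span ℤ G, z + x ∈ hull ℝ G := by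
  obtain ⟨n, c, g, rfl⟩ := Submodule.mem_span_set'.1 hx
  refine ⟨∑ i, ⌈-c i⌉ • (g i : E), sum_mem fun i _ => Submodule.smul_mem _ _
    (Submodule.subset_span (g i).2), ?_⟩
  simp only [← Int.cast_smul_eq_zsmul ℝ, ← Finset.sum_add_distrib, ← add_smul]
  exact sum_mem fun i _ => PointedCone.smul_mem _ (neg_le_iff_add_nonneg.1 (Int.le_ceil _))
    (subset_hull (g i).2)

lemma interior_nonempty_of_span_eq_top [FiniteDimensional ℝ E] {U : Set E} (hU : Convex ℝ U)
    (hU0 : 0 ∈ U) (hspan : Submodule.span ℝ U = ⊤) : (interior U).Nonempty := by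
  rw [hU.interior_nonempty_iff_affineSpan_eq_top, ← AffineSubspace.coe_eq_univ_iff,
    ← Set.insert_eq_of_mem hU0, affineSpan_insert_zero, hspan, Submodule.top_coe]

lemma smul_add_hull_add_subset (C G : Set E) {a : ℝ} (ha : 0 < a) :
    a • (C + (hull ℝ G : Set E)) + (hull ℝ G : Set E) ⊆ a • (C + (hull ℝ G : Set E)) := by
  rintro _ ⟨_, ⟨_, ⟨x, hx, y, hy, rfl⟩, rfl⟩, z, hz, rfl⟩
  refine ⟨x + (y + a⁻¹ • z), Set.add_mem_add hx (add_mem hy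
    (PointedCone.smul_mem _ (by positivity) hz)), ?_⟩
  simp only [smul_add, smul_inv_smul₀ ha.ne', add_assoc]

variable {L : Submodule ℤ E} {W : Submodule ℝ E} {U : Set E} {ι : Type*} [Fintype ι]
  {π : E →ₗ[ℝ] (ι → ℝ)}

lemma IsQuotientCoord.image_add_hull (hπ : IsQuotientCoord L W π) (C : Set E) {G : Set E}
    (hG : G ⊆ W) : π '' (C + (hull ℝ G : Set E)) = π '' C := by
  have hhull {y : E} (hy : y ∈ hull ℝ G) : π y = 0 :=
    hπ.apply_eq_zero.2 (Submodule.span_le.2 hG (Submodule.span_subset_span _ ℝ G hy))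
  refine (Set.image_add π).trans (Set.Subset.antisymm ?_ ?_)
  · rintro _ ⟨x, hx, _, ⟨y, hy, rfl⟩, rfl⟩
    simpa [hhull hy] using hx
  · exact Set.subset_add_left _ ⟨0, zero_mem _, map_zero π⟩

lemma IsQuotientCoord.hasDualVector (hπ : IsQuotientCoord L W π) {c : ℝ}
    (h : HasDualVector (stdLattice ι) (π '' U) c) : HasDualVector L U c := by
  obtain ⟨φ, hφ, hφL, hφU⟩ := h
  refine ⟨φ ∘ₗ π, fun h0 => hφ ?_, fun x hx => hφL _ (hπ.apply_mem hx),
    fun x hx => hφU _ (Set.mem_image_of_mem π hx)⟩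
  rwa [← LinearMap.zero_comp π, LinearMap.cancel_right (LinearMap.range_eq_top.1 hπ.range_eq)] at h0

lemma IsQuotientCoord.image_subset_hull (hπ : IsQuotientCoord L W π)
    (hU : U ⊆ hull ℝ (L ∩ U : Set E)) :
    π '' U ⊆ hull ℝ (stdLattice ι ∩ π '' U : Set (ι → ℝ)) := by
  refine (Set.image_mono hU).trans ?_
  rw [← PointedCone.coe_map, map_hull]
  refine Submodule.span_mono ?_
  rintro _ ⟨x, hx, rfl⟩
  exact ⟨hπ.apply_mem hx.1, Set.mem_image_of_mem π hx.2⟩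

lemma IsQuotientCoord.disjoint_interior_smul_image {G : Set E} (hG : G ⊆ L)
    (hπ : IsQuotientCoord L (Submodule.span ℝ G) π) (hU : Convex ℝ U)
    (hUne : (interior U).Nonempty) {a : ℝ} (ha : 0 < a)
    (hUG : a • U + (hull ℝ G : Set E) ⊆ a • U) (hL : Disjoint (L : Set E) (interior (a • U))) :
    Disjoint (stdLattice ι : Set (ι → ℝ)) (interior (a • π '' U)) := by
  refine Set.disjoint_left.2 fun y hyL hy => ?_
  rw [← Set.image_smul_comm _ _ _ fun x => π.map_smul a x] at hy
  obtain ⟨u, hu, rfl⟩ := interior_image_subset (hU.smul a)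
    (by rw [interior_smul₀ ha.ne']; exact hUne.smul_set) π hy
  obtain ⟨ℓ, hℓ, hℓu⟩ := hπ.exists_apply_eq hyL
  obtain ⟨z, hz, hzℓ⟩ := exists_add_mem_hull_of_mem_span (x := ℓ - u)
    (by rw [← hπ.apply_eq_zero, map_sub, hℓu, sub_self])
  refine Set.disjoint_left.1 hL (add_mem (Submodule.span_le.2 hG hz) hℓ) (interior_mono hUG ?_)
  have := subset_interior_add_left (Set.add_mem_add hu hzℓ)
  rwa [← add_sub_assoc, add_sub_cancel] at this

end Recession

section

open Module

theorem stmt_18_general {E : Type*} [NormedAddCommGroup E] [NormedSpace ℝ E]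
    [FiniteDimensional ℝ E] {L : Submodule ℤ E} [DiscreteTopology L] [IsZLattice ℝ L]
    {C G U : Set E} (hC : Convex ℝ C) (hCc : IsCompact C) (hG : G ⊆ L) (hU : U = C + coneHull G)
    (hU0 : 0 ∈ U) (hspan : Submodule.span ℝ U = ⊤) (hgen : U ⊆ coneHull (L ∩ U : Set E)) {a : ℝ}
    (ha : 0 < a) (hL : Disjoint (L : Set E) (interior (a • U))) {l : ℕ}
    (hl : l = finrank ℝ E - finrank ℝ (Submodule.span ℝ (coneHull G))) :
    1 ≤ l ∧ HasDualVector L U (1 / gammaFn l a) := by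
  rw [coneHull_eq_hull] at hU hgen hl
  have hspanG : Submodule.span ℝ (PointedCone.hull ℝ G : Set E) = Submodule.span ℝ G :=
    Submodule.span_span_of_tower _ ℝ G
  rw [hspanG] at hl
  have hUconv : Convex ℝ U := hU ▸ hC.add (PointedCone.convex _)
  have hUint := interior_nonempty_of_span_eq_top hUconv hU0 hspan
  obtain ⟨π, hπ⟩ := (isRational_span hG).exists_isQuotientCoord (ι := Fin l) (by
    rw [Fintype.card_fin, hl, Nat.sub_add_cancel (Submodule.finrank_le _)])
  have hdisj := hπ.disjoint_interior_smul_image hG hUconv hUint ha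
    (hU ▸ smul_add_hull_add_subset C G ha) hL
  have hK : IsLatticeGenerated (stdLattice (Fin l)) (π '' U) :=
    { convex := hUconv.linear_image π
      isCompact := by
        rw [hU, hπ.image_add_hull C Submodule.subset_span]
        exact hCc.image (LinearMap.continuous_of_finiteDimensional π)
      zero_mem := ⟨0, hU0, map_zero π⟩
      nonempty_interior := interior_nonempty_of_span_eq_top (hUconv.linear_image π)
        ⟨0, hU0, map_zero π⟩ (by rw [← Submodule.map_span, hspan, Submodule.map_top, hπ.range_eq])
      subset_hull := hπ.image_subset_hull hgen }
  have hal := hK.le_finrank ha hdisj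
  have hdual := hK.hasDualVector ha hdisj
  rw [finrank_fin_fun] at hal hdual
  exact ⟨Nat.cast_pos.1 (ha.trans_le hal), hπ.hasDualVector hdual⟩

end

lemma coe_stdLattice_fin (d : ℕ) : (stdLattice (Fin d) : Set (Fin d → ℝ)) = intPts d :=
  Set.ext fun _ => mem_stdLattice

lemma HasDualVector.exists_mem_intPts {d : ℕ} {U : Set (Fin d → ℝ)} {c : ℝ}
    (h : HasDualVector (stdLattice (Fin d)) U c) :
    ∃ φ ∈ intPts d, φ ≠ 0 ∧ ∀ u ∈ U, ∑ i, φ i * u i ∈ Set.Icc 0 c := by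
  obtain ⟨φ, hφ, hφL, hφU⟩ := h
  have hsum (x : Fin d → ℝ) : ∑ i, φ (Pi.single i 1) * x i = φ x := by
    conv_rhs => rw [pi_eq_sum_univ' x, map_sum]
    simp [mul_comm]
  refine ⟨fun i => φ (Pi.single i 1), fun i => hφL _ ?_, fun h0 => hφ ?_, fun u hu => ?_⟩
  · exact mem_stdLattice.2 fun j => ⟨(Pi.single i 1 : Fin d → ℤ) j, by
      obtain rfl | hj := eq_or_ne j i <;> simp [*]⟩
  · exact LinearMap.ext fun x => by simpa [funext_iff.1 h0] using (hsum x).symm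
  · exact (hsum u).symm ▸ hφU u hu

/-- Let `N` be a lattice of rank `d ≥ 1` with dual lattice `M` (modelled as `ℤ^d ⊆ ℝ^d`),
and let `σ ⊆ N_ℝ` be a rational polyhedral cone with `dim σ = d` and `σ ≠ N_ℝ`. Let
`U = conv(F) + cone(G) ⊆ N_ℝ` with `F ⊆ N_ℝ` finite and `G ⊆ N` finite, such that
`0 ∈ U`, `⋃_{t>0} tU = σ`, and `N ∩ U` contains a finite set generating `σ` as a convex
cone. Let `a > 0` with `N ∩ int(aU) = ∅`. Set `l = d - dim(span(cone(G)))`, the corank of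
the recession cone of `U`. Then `l ≥ 1` and there exists a nonzero `φ ∈ M` with `φ_ℝ`
nonnegative on `σ` and `φ_ℝ(U) ⊆ [0, 1/γ(l, a)]`. -/
theorem stmt_18 (d : ℕ) (hd : 1 ≤ d)
    (S : Finset (Fin d → ℝ)) (hS : (S : Set (Fin d → ℝ)) ⊆ intPts d)
    (σ : Set (Fin d → ℝ)) (hσ : σ = coneHull (S : Set (Fin d → ℝ)))
    (hσdim : Submodule.span ℝ σ = ⊤) (hσne : σ ≠ Set.univ)
    (F G : Finset (Fin d → ℝ)) (hG : (G : Set (Fin d → ℝ)) ⊆ intPts d)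
    (U : Set (Fin d → ℝ))
    (hUdef : U = {x | ∃ p ∈ convexHull ℝ (F : Set (Fin d → ℝ)),
      ∃ s ∈ coneHull (G : Set (Fin d → ℝ)), x = p + s})
    (hU0 : (0 : Fin d → ℝ) ∈ U)
    (hUσ : {x | ∃ t : ℝ, 0 < t ∧ ∃ u ∈ U, x = t • u} = σ)
    (hgen : ∃ S' : Finset (Fin d → ℝ), (S' : Set (Fin d → ℝ)) ⊆ intPts d ∩ U ∧
      coneHull (S' : Set (Fin d → ℝ)) = σ)
    (a : ℝ) (ha : 0 < a)
    (hmld : intPts d ∩ interior (a • U) = ∅)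
    (l : ℕ)
    (hl : l = d - Module.finrank ℝ
      (Submodule.span ℝ (coneHull (G : Set (Fin d → ℝ))))) :
    1 ≤ l ∧
    ∃ φ : Fin d → ℝ, φ ∈ intPts d ∧ φ ≠ 0 ∧
      (∀ e ∈ σ, 0 ≤ ∑ i, φ i * e i) ∧
      (∀ u ∈ U, (∑ i, φ i * u i) ∈ Set.Icc 0 (1 / gammaFn l a)) := by
  have hspan : Submodule.span ℝ U = ⊤ := top_unique <| hσdim.ge.trans <| Submodule.span_le.2 <| by
    rw [← hUσ]
    rintro _ ⟨t, -, u, hu, rfl⟩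
    exact Submodule.smul_mem _ t (Submodule.subset_span hu)
  have hgenU : U ⊆ coneHull (stdLattice (Fin d) ∩ U : Set (Fin d → ℝ)) := by
    obtain ⟨S', hS', hS'σ⟩ := hgen
    intro u hu
    have hu' : u ∈ coneHull (S' : Set (Fin d → ℝ)) :=
      hS'σ ▸ hUσ ▸ ⟨1, one_pos, u, hu, (one_smul ℝ u).symm⟩
    rw [coneHull_eq_hull] at hu' ⊢
    exact Submodule.span_mono (coe_stdLattice_fin d ▸ hS') hu'
  have hUadd : U = convexHull ℝ (F : Set (Fin d → ℝ)) + coneHull (G : Set (Fin d → ℝ)) := by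
    simp only [hUdef, Set.ext_iff, Set.mem_add, Set.mem_ofPred_eq, eq_comm, implies_true]
  obtain ⟨hl1, hdual⟩ := stmt_18_general (convex_convexHull ℝ _)
    (F.finite_toSet.isCompact_convexHull ℝ) (coe_stdLattice_fin d ▸ hG) hUadd hU0 hspan hgenU ha
    (by rwa [coe_stdLattice_fin, Set.disjoint_iff_inter_eq_empty])
    (hl.trans (by rw [Module.finrank_fin_fun]))
  obtain ⟨φ, hφ, hφ0, hφU⟩ := hdual.exists_mem_intPts
  refine ⟨hl1, φ, hφ, hφ0, fun e he => ?_, hφU⟩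
  obtain ⟨t, ht, u, hu, rfl⟩ := hUσ.ge he
  simpa [mul_left_comm _ t, ← Finset.mul_sum] using mul_nonneg ht.le (hφU u hu).1
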